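/- Let Δ be a simplicial complex over a field k and suppose J ⊆ V(Δ) is an excellent set for Δ. If Δ satisfies Serre's condition (S_ℓ), then the anti-star ast_Δ(J) = {G ∈ Δ : J ∩ G = ∅} also satisfies (S_ℓ). -/

import Mathlib

open Finset

/-- An abstract simplicial complex on vertex type `V`, given by a finite, downward closed
family of finite subsets of `V` (its faces). -/
structure SComplex (V : Type) [DecidableEq V] where
  faces : Finset (Finset V)
  down_closed : ∀ ⦃s t : Finset V⦄, s ∈ faces → t ⊆ s → t ∈ faces

namespace SComplex

variable {V : Type} [DecidableEq V]

/-- `K.rank = d = dim k[Δ] = dim Δ + 1` is the maximal cardinality of a face of `K`. -/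
def rank (K : SComplex V) : ℕ := K.faces.sup Finset.card

/-- `F` is a facet (maximal face) of `K`. -/
def IsFacet (K : SComplex V) (F : Finset V) : Prop :=
  F ∈ K.faces ∧ ∀ G ∈ K.faces, F ⊆ G → F = G

/-- `K` is pure: all facets have the maximal cardinality `K.rank`. -/
def Pure (K : SComplex V) : Prop := ∀ F : Finset V, K.IsFacet F → F.card = K.rank

/-- The link `lk_K(T) = {G ∈ K | T ∪ G ∈ K, T ∩ G = ∅}`. -/
def link (K : SComplex V) (T : Finset V) : SComplex V where
  faces := K.faces.filter fun G => Disjoint T G ∧ T ∪ G ∈ K.faces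
  down_closed := by
    intro s t hs hts
    simp only [Finset.mem_filter] at hs ⊢
    exact ⟨K.down_closed hs.1 hts, hs.2.1.mono_right hts,
      K.down_closed hs.2.2 (Finset.union_subset_union_right hts)⟩

/-- The anti-star `ast_K(T) = {G ∈ K | T ∩ G = ∅}`. -/
def antistar (K : SComplex V) (T : Finset V) : SComplex V where
  faces := K.faces.filter fun G => Disjoint T G
  down_closed := by
    intro s t hs hts
    simp only [Finset.mem_filter] at hs ⊢
    exact ⟨K.down_closed hs.1 hts, hs.2.mono_right hts⟩

/-- The induced subcomplex of `K` on a set `W` of vertices. -/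
def restrict (K : SComplex V) (W : Finset V) : SComplex V where
  faces := K.faces.filter fun G => G ⊆ W
  down_closed := by
    intro s t hs hts
    simp only [Finset.mem_filter] at hs ⊢
    exact ⟨K.down_closed hs.1 hts, hts.trans hs.2⟩

/-- The subcomplex of faces of cardinality at most `m`; as cardinality = dimension + 1, this is
the `(m-1)`-skeleton `Δ^{(m-1)}`. -/
def skelCard (K : SComplex V) (m : ℕ) : SComplex V where
  faces := K.faces.filter fun G => G.card ≤ m
  down_closed := by
    intro s t hs hts
    simp only [Finset.mem_filter] at hs ⊢
    exact ⟨K.down_closed hs.1 hts, le_trans (Finset.card_le_card hts) hs.2⟩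

/-- `K.trunc j` is `[Δ]_{>j}`, the order complex of the poset of faces of `K` of cardinality
(equivalently, of height in the face poset) `> j`: its faces are the chains of such faces.
For `j = 0` this is the barycentric subdivision of `K`. -/
def trunc (K : SComplex V) (j : ℕ) : SComplex (Finset V) where
  faces := K.faces.powerset.filter fun C =>
    (∀ s ∈ C, j < s.card) ∧ ∀ s ∈ C, ∀ t ∈ C, s ⊆ t ∨ t ⊆ s
  down_closed := by
    intro s t hs hts
    simp only [Finset.mem_powerset, Finset.mem_filter] at hs ⊢
    exact ⟨hts.trans hs.1, fun a ha => hs.2.1 a (hts ha),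
      fun a ha b hb => hs.2.2 a (hts ha) b (hts hb)⟩

/-- `Δ_A`: the complex obtained from `K` by deleting all faces containing a member of `A`. -/
def deleteAbove (K : SComplex V) (A : Finset (Finset V)) : SComplex V where
  faces := K.faces.filter fun s => ∀ τ ∈ A, ¬ τ ⊆ s
  down_closed := by
    intro s t hs hts
    simp only [Finset.mem_filter] at hs ⊢
    exact ⟨K.down_closed hs.1 hts, fun τ hτ hsub => hs.2 τ hτ (hsub.trans hts)⟩

/-- The number of faces of `K` of cardinality `i`, i.e. the face number `f_{i-1}(K)`. -/
def faceCount (K : SComplex V) (i : ℕ) : ℕ := (K.faces.filter fun s => s.card = i).card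

/-- The Euler characteristic `χ(K) = Σ_{i ≥ 0} (-1)^i f_i(K)`. -/
def eulerChar (K : SComplex V) : ℤ :=
  ∑ s ∈ K.faces.filter (fun s => s ≠ ∅), (-1 : ℤ) ^ (s.card - 1)

/-- The reduced Euler characteristic `χ̃(K) = χ(K) - 1`. -/
def reducedEulerChar (K : SComplex V) : ℤ := eulerChar K - 1

end SComplex

/-! ### Simplicial homology with coefficients in a field `k` -/

/-- An arbitrary linear order on a finite type. -/
noncomputable def arbOrder (V : Type) [Fintype V] : LinearOrder V :=
  LinearOrder.lift' (Fintype.equivFin V) (Equiv.injective _)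

namespace SComplex

variable {V : Type} [DecidableEq V]

/-- The faces of `K` of cardinality `n`, as a type. -/
def Faces (K : SComplex V) (n : ℕ) : Type :=
  {s : Finset V // s ∈ K.faces ∧ s.card = n}

/-- The space of reduced simplicial `n`-chains of `K`: formal `k`-linear combinations of the
faces of cardinality `n` (such a face has dimension `n - 1`; the empty face sits in degree `0`,
which produces *reduced* homology). -/
abbrev ChainsOf (k : Type) [Field k] (K : SComplex V) (n : ℕ) : Type := Faces K n →₀ k

variable (k : Type) [Field k] [Fintype V]

/-- The simplicial boundary map, with signs determined by an arbitrary but fixed linear order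
on the vertices. -/
noncomputable def bd (K : SComplex V) (n : ℕ) :
    ChainsOf k K n →ₗ[k] ChainsOf k K (n - 1) :=
  letI : LinearOrder V := arbOrder V
  Finsupp.lsum k fun s : Faces K n =>
    LinearMap.toSpanSingleton k (ChainsOf k K (n - 1))
      (∑ x ∈ s.1.attach,
        ((-1 : k) ^ (s.1.filter (fun y => y < x.1)).card) •
          Finsupp.single
            (⟨s.1.erase x.1,
              K.down_closed s.2.1 (Finset.erase_subset _ _),
              by rw [Finset.card_erase_of_mem x.2, s.2.2]⟩ : Faces K (n - 1))
            (1 : k))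

/-- `HVanish k K i` says that the reduced simplicial homology `H̃_{i-1}(K; k)` vanishes.
Note the indexing convention: the index `i` is the *cardinality* of the relevant faces, so this
is reduced homology in topological degree `i - 1`; e.g. `HVanish k K 1` says `H̃₀(K; k) = 0`
(`K` is connected and nonempty) and `HVanish k K 0` says `H̃₋₁(K; k) = 0` (`K` has a face).
Since the cycles in degree `i - 1` are `ker ∂ᵢ` and the boundaries are `im ∂ᵢ₊₁`, and the
boundaries are always contained in the cycles, vanishing of homology says exactly that every
cycle is a boundary. -/
def HVanish (K : SComplex V) (i : ℕ) : Prop :=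
  LinearMap.ker (bd k K i) ≤ LinearMap.range (bd k K (i + 1))

/-- `redHomologyRank k K i` is the dimension `dim_k H̃_{i-1}(K; k)` of the reduced simplicial
homology of `K` in topological degree `i - 1` (cardinality index `i`), namely the dimension of
the cycles `ker ∂ᵢ` modulo the boundaries `im ∂ᵢ₊₁`. -/
noncomputable def redHomologyRank (K : SComplex V) (i : ℕ) : ℕ :=
  Module.finrank k ↥(LinearMap.ker (bd k K i)) -
    Module.finrank k ↥(LinearMap.range (bd k K (i + 1)) ⊓ LinearMap.ker (bd k K i))

end SComplex

/-! ### Depth, Serre conditions, and Stanley–Reisner rings -/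

/-- The length of a longest regular sequence on `R` contained in the ideal `I`
(the `I`-depth of `R`). -/
noncomputable def depthIn (R : Type) [CommRing R] (I : Ideal R) : ℕ :=
  sSup {n : ℕ | ∃ rs : List R, rs.length = n ∧ (∀ r ∈ rs, r ∈ I) ∧
    RingTheory.Sequence.IsRegular R rs}

/-- Serre's condition `(S_ℓ)` for a commutative ring:
`depth R_p ≥ min {ℓ, dim R_p}` for every prime `p`. -/
def SerreCondS (ℓ : ℕ) (R : Type) [CommRing R] : Prop :=
  ∀ (p : Ideal R) (hp : p.IsPrime),
    haveI := hp
    min ((ℓ : ℕ∞) : WithBot ℕ∞) (ringKrullDim (Localization.AtPrime p)) ≤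
      ((depthIn (Localization.AtPrime p)
        (IsLocalRing.maximalIdeal (Localization.AtPrime p)) : ℕ∞) : WithBot ℕ∞)

namespace SComplex

variable {V : Type} [DecidableEq V] (k : Type) [Field k]

/-- The Stanley–Reisner ideal of `K`: generated by the squarefree monomials supported on
non-faces. -/
noncomputable def srIdeal (K : SComplex V) : Ideal (MvPolynomial V k) :=
  Ideal.span ((fun s : Finset V => ∏ v ∈ s, MvPolynomial.X v) '' {s : Finset V | s ∉ K.faces})

/-- The Stanley–Reisner ring `k[Δ]`. -/
noncomputable abbrev SRRing (K : SComplex V) : Type := MvPolynomial V k ⧸ srIdeal k K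

/-- `depth k[Δ]`: the depth of the Stanley–Reisner ring with respect to its irrelevant
(graded maximal) ideal. -/
noncomputable def srDepth (K : SComplex V) : ℕ :=
  depthIn (SRRing k K)
    (Ideal.span (Set.range fun v : V => Ideal.Quotient.mk (srIdeal k K) (MvPolynomial.X v)))

/-- `k[Δ]` satisfies Serre's condition `(S_ℓ)`. -/
def SerreS (ℓ : ℕ) (K : SComplex V) : Prop := SerreCondS ℓ (SRRing k K)

end SComplex

/-! ### Order complexes of finite posets -/

/-- The order complex `O(P)` of a finite poset: its faces are the chains of `P`. -/
def orderComplex (P : Type) [DecidableEq P] [Fintype P] [PartialOrder P]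
    [∀ a b : P, Decidable (a ≤ b)] : SComplex P where
  faces := Finset.univ.filter fun C : Finset P => ∀ a ∈ C, ∀ b ∈ C, a ≤ b ∨ b ≤ a
  down_closed := by
    intro s t hs hts
    simp only [Finset.mem_filter, Finset.mem_univ, true_and] at hs ⊢
    exact fun a ha b hb => hs a (hts ha) b (hts hb)

/-- The height of an element of a finite poset: the maximal cardinality of a chain with top
element `p` (so minimal elements have height `1`). -/
def pheight {P : Type} [DecidableEq P] [Fintype P] [PartialOrder P]
    [∀ a b : P, Decidable (a ≤ b)] (p : P) : ℕ :=
  Finset.sup (Finset.univ.filter fun C : Finset P =>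
    p ∈ C ∧ (∀ a ∈ C, a ≤ p) ∧ ∀ a ∈ C, ∀ b ∈ C, a ≤ b ∨ b ≤ a) Finset.card

/-- The height `ht P` of a finite poset: the maximal cardinality of a chain. -/
def pheightMax (P : Type) [DecidableEq P] [Fintype P] [PartialOrder P]
    [∀ a b : P, Decidable (a ≤ b)] : ℕ :=
  Finset.univ.sup (pheight (P := P))

/-- `O(P_{>j})`: the full subcomplex of the order complex on the elements of height `> j`. -/
def ocAbove (P : Type) [DecidableEq P] [Fintype P] [PartialOrder P]
    [∀ a b : P, Decidable (a ≤ b)] (j : ℕ) : SComplex P :=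
  (orderComplex P).restrict (Finset.univ.filter fun p => j < pheight p)

/-- The face poset `F(Δ)` of a simplicial complex: the nonempty faces, ordered by inclusion. -/
abbrev SComplex.FacePoset {V : Type} [DecidableEq V] (K : SComplex V) : Type :=
  {s : Finset V // s ∈ K.faces ∧ s ≠ ∅}

instance {V : Type} [DecidableEq V] (K : SComplex V) :
    ∀ a b : K.FacePoset, Decidable (a ≤ b) := fun a b =>
  decidable_of_iff (a.1 ≤ b.1) Subtype.coe_le_coe

open CategoryTheory Abelian RingTheory.Sequence IsLocalRing in
/-- `M` has depth at least `n` over the local ring `R`, in terms of vanishing of `Ext`. -/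
def DepthGE (R : Type) [CommRing R] [IsLocalRing R] (M : Type) [AddCommGroup M] [Module R M]
    (n : ℕ) : Prop :=
  ∀ i < n, Subsingleton (Ext (ModuleCat.of R (R ⧸ maximalIdeal R)) (ModuleCat.of R M) i)

namespace DepthGE

open CategoryTheory Abelian RingTheory.Sequence IsLocalRing Limits

section

variable {R : Type} [CommRing R] [IsLocalRing R]
  {M M₁ M₂ M₃ : Type} [AddCommGroup M] [Module R M] [AddCommGroup M₁] [Module R M₁]
  [AddCommGroup M₂] [Module R M₂] [AddCommGroup M₃] [Module R M₃] {n : ℕ}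

theorem mono {m : ℕ} (h : DepthGE R M n) (hm : m ≤ n) : DepthGE R M m :=
  fun i hi => h i (hi.trans_le hm)

theorem of_subsingleton [Subsingleton M] : DepthGE R M n := fun i _ => by
  have : Subsingleton (ModuleCat.of R M) := ‹_›
  have hz : IsZero (ModuleCat.of R M) := ModuleCat.isZero_of_subsingleton _
  refine ⟨fun a b => ?_⟩
  have key (a : Ext (ModuleCat.of R (R ⧸ maximalIdeal R)) (ModuleCat.of R M) i) : a = 0 := by
    rw [← Ext.comp_mk₀_id a, hz.eq_of_src (𝟙 _) 0, Ext.mk₀_zero, Ext.comp_zero]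
  rw [key a, key b]

theorem of_exact (f : M₁ →ₗ[R] M₂) (g : M₂ →ₗ[R] M₃) (hf : Function.Injective f)
    (hg : Function.Surjective g) (hfg : Function.Exact f g)
    (h₁ : DepthGE R M₁ (n + 1)) (h₂ : DepthGE R M₂ n) : DepthGE R M₃ n := by
  intro i hi
  let S : ShortComplex (ModuleCat R) := ShortComplex.mk (ModuleCat.ofHom f) (ModuleCat.ofHom g) (by
    ext x; exact hfg.apply_apply_eq_zero x)
  have hS : S.ShortExact := {
    exact := (ShortComplex.ShortExact.moduleCat_exact_iff_function_exact _).mpr hfg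
    mono_f := (ModuleCat.mono_iff_injective _).mpr hf
    epi_g := (ModuleCat.epi_iff_surjective _).mpr hg }
  have h1 := h₁ (i + 1) (by omega)
  have h2 := h₂ i hi
  refine subsingleton_of_forall_eq 0 fun a => ?_
  obtain ⟨b, rfl⟩ := Ext.covariant_sequence_exact₃ _ hS a rfl (h1.elim _ _)
  rw [h2.elim b 0, Ext.zero_comp]

theorem congr (e : M₁ ≃ₗ[R] M₂) (h : DepthGE R M₁ n) : DepthGE R M₂ n :=
  of_exact (M₁ := PUnit) 0 e.toLinearMap (fun _ _ _ => rfl) e.surjective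
    ((LinearMap.exact_zero_iff_injective _ _).mpr e.injective) of_subsingleton h

theorem quotSMulTop {x : R} (hx : IsSMulRegular M x) (h : DepthGE R M (n + 1)) :
    DepthGE R (QuotSMulTop x M) n :=
  of_exact (LinearMap.lsmul R M x) (Submodule.mkQ _) hx (Submodule.mkQ_surjective _)
    (LinearMap.exact_lsmul_mkQ_smul_top M x) h (h.mono n.le_succ)

theorem quotient_ofList {rs : List R} (hrs : IsWeaklyRegular M rs)
    (h : DepthGE R M (n + rs.length)) :
    DepthGE R (M ⧸ (Ideal.ofList rs • ⊤ : Submodule R M)) n := by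
  induction rs generalizing M with
  | nil =>
    refine congr (Submodule.quotEquivOfEqBot _ ?_).symm h
    simp
  | cons x rs ih =>
    rw [isWeaklyRegular_cons_iff] at hrs
    exact (ih hrs.2 (quotSMulTop hrs.1 h)).congr
      (Submodule.quotOfListConsSMulTopEquivQuotSMulTopInner M x rs).symm

variable [Module.Finite R M]

theorem maximalIdeal_smul_lt [Nontrivial M] : maximalIdeal R • (⊤ : Submodule R M) < ⊤ :=
  (Submodule.top_ne_ideal_smul_of_le_jacobson_annihilator
    (maximalIdeal_le_jacobson _)).symm.lt_top

variable [IsNoetherianRing R]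

theorem exists_isRegular [Nontrivial M] (h : DepthGE R M n) :
    ∃ rs : List R, rs.length = n ∧ (∀ r ∈ rs, r ∈ maximalIdeal R) ∧ IsRegular M rs := by
  refine ModuleCat.exists_isRegular_of_exists_subsingleton_ext (maximalIdeal R) n
    (ModuleCat.of R M) maximalIdeal_smul_lt (ModuleCat.of R (R ⧸ maximalIdeal R)) ?_ h
  change Module.support R (R ⧸ maximalIdeal R) = _
  rw [Module.support_eq_zeroLocus, Ideal.annihilator_quotient]

theorem of_isWeaklyRegular {rs : List R} (mem : ∀ r ∈ rs, r ∈ maximalIdeal R)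
    (hrs : IsWeaklyRegular M rs) (hn : n ≤ rs.length) : DepthGE R M n := by
  rcases subsingleton_or_nontrivial M with hM | hM
  · exact of_subsingleton
  refine fun i hi => ModuleCat.subsingleton_ext_of_exists_isRegular (maximalIdeal R)
    (ModuleCat.of R (R ⧸ maximalIdeal R)) ?_ (ModuleCat.of R M) maximalIdeal_smul_lt rs mem ?_ i
    (hi.trans_le hn)
  · change Module.support R (R ⧸ maximalIdeal R) ⊆ _
    rw [Module.support_eq_zeroLocus, Ideal.annihilator_quotient]
  · exact (IsLocalRing.isRegular_iff_isWeaklyRegular_of_subset_maximalIdeal mem).mpr hrs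

theorem succ_of_quotSMulTop {x : R} (hxm : x ∈ maximalIdeal R) (hx : IsSMulRegular M x)
    (h : DepthGE R (QuotSMulTop x M) n) : DepthGE R M (n + 1) := by
  rcases subsingleton_or_nontrivial M with hM | hM
  · exact of_subsingleton
  have := nontrivial_quotSMulTop_of_mem_maximalIdeal M hxm
  obtain ⟨rs, hl, hm, hr⟩ := h.exists_isRegular
  exact of_isWeaklyRegular (rs := x :: rs) (by simpa using ⟨hxm, hm⟩)
    ((isWeaklyRegular_cons_iff M x rs).mpr ⟨hx, hr.1⟩) (by simp [hl])

theorem eq_zero_of_forall_smul_eq_zero (h : DepthGE R M 1) {u : M}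
    (hu : ∀ a ∈ maximalIdeal R, a • u = 0) : u = 0 := by
  rcases subsingleton_or_nontrivial M with hM | hM
  · exact Subsingleton.elim _ _
  obtain ⟨rs, hl, hm, hr⟩ := h.exists_isRegular
  obtain ⟨x, rfl⟩ := List.length_eq_one_iff.mp hl
  have hx := ((isRegular_cons_iff M x []).mp hr).1
  exact hx.right_eq_zero_of_smul (hu x (hm x (by simp)))

theorem exists_isSMulRegular
    (h : ∀ u : M, (∀ a ∈ maximalIdeal R, a • u = 0) → u = 0) :
    ∃ x ∈ maximalIdeal R, IsSMulRegular M x := by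
  have : Subsingleton ((R ⧸ maximalIdeal R) →ₗ[R] M) := by
    refine subsingleton_of_forall_eq 0 fun f => Submodule.linearMap_qext _ (LinearMap.ext_ring ?_)
    refine h _ fun a ha => ?_
    change a • f (Ideal.Quotient.mk _ 1) = 0
    rw [← map_smul, show a • Ideal.Quotient.mk (maximalIdeal R) 1 = 0 from
      Ideal.Quotient.eq_zero_iff_mem.mpr (by simpa using ha), map_zero]
  simpa [Ideal.annihilator_quotient] using IsSMulRegular.subsingleton_linearMap_iff.mp this

end

section

variable {R S : Type} [CommRing R] [IsLocalRing R] [IsNoetherianRing R]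
  [CommRing S] [IsLocalRing S] [IsNoetherianRing S] [Algebra R S] {n : ℕ}

theorem iff_of_surjective (hs : Function.Surjective (algebraMap R S)) :
    DepthGE R S n ↔ DepthGE S S n := by
  have : Module.Finite R S := Module.Finite.of_surjective (Algebra.linearMap R S) hs
  have := IsLocalHom.of_surjective (algebraMap R S) hs
  have hmem (a : R) : algebraMap R S a ∈ maximalIdeal S ↔ a ∈ maximalIdeal R := by
    simp
  constructor
  · intro h
    obtain ⟨rs, hl, hm, hr⟩ := h.exists_isRegular
    refine of_isWeaklyRegular (rs := rs.map (algebraMap R S)) ?_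
      ((isWeaklyRegular_map_algebraMap_iff S S rs).mpr hr.1) (by simp [hl])
    simpa only [List.forall_mem_map, hmem] using hm
  · intro h
    obtain ⟨ss, hl, hm, hr⟩ := h.exists_isRegular
    obtain ⟨rs, rfl⟩ : ∃ rs : List R, rs.map (algebraMap R S) = ss :=
      (List.map_surjective_iff.mpr hs) ss
    refine of_isWeaklyRegular (rs := rs) ?_
      ((isWeaklyRegular_map_algebraMap_iff S S rs).mp hr.1) (by simpa using hl.ge)
    simpa only [List.forall_mem_map, hmem] using hm

theorem of_flat [Module.Flat R S]
    (hm : (maximalIdeal R).map (algebraMap R S) = maximalIdeal S)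
    (h : DepthGE S S n) : DepthGE R R n := by
  have hloc : IsLocalHom (algebraMap R S) :=
    ((local_hom_TFAE (algebraMap R S)).out 0 2).mpr hm.le
  have hff : Module.FaithfullyFlat R S := Module.FaithfullyFlat.of_flat_of_isLocalHom
  suffices ∀ r ≤ n, ∃ rs : List R, rs.length = r ∧ (∀ r ∈ rs, r ∈ maximalIdeal R) ∧
      IsWeaklyRegular R rs by
    obtain ⟨rs, hl, hm, hr⟩ := this n le_rfl
    exact of_isWeaklyRegular hm hr hl.ge
  intro r hr
  induction r with
  | zero => exact ⟨[], by simp⟩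
  | succ r ih =>
    obtain ⟨rs, hl, hrm, hreg⟩ := ih (by omega)
    have hS : DepthGE S (S ⧸ (Ideal.ofList (rs.map (algebraMap R S)) • ⊤ : Submodule S S)) 1 :=
      quotient_ofList (IsWeaklyRegular.of_flat hreg) (h.mono (by simp; omega))
    obtain ⟨x, hx, hxr⟩ := exists_isSMulRegular
      (M := R ⧸ (Ideal.ofList rs • ⊤ : Submodule R R)) (by
        intro u hu
        obtain ⟨u, rfl⟩ := Submodule.Quotient.mk_surjective _ u
        rw [Submodule.Quotient.mk_eq_zero]
        have key : (Submodule.Quotient.mk (algebraMap R S u) :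
            S ⧸ (Ideal.ofList (rs.map (algebraMap R S)) • ⊤ : Submodule S S)) = 0 := by
          refine hS.eq_zero_of_forall_smul_eq_zero fun a ha => ?_
          rw [← hm] at ha
          rw [← Submodule.Quotient.mk_smul, Submodule.Quotient.mk_eq_zero]
          have hle : (maximalIdeal R).map (algebraMap R S) ≤
              (Submodule.comap (LinearMap.toSpanSingleton S S (algebraMap R S u))
                (Ideal.ofList (rs.map (algebraMap R S)) • ⊤)) := by
            rw [Ideal.map_le_iff_le_comap]
            intro b hb
            have := hu b hb
            rw [← Submodule.Quotient.mk_smul, Submodule.Quotient.mk_eq_zero] at this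
            have h2 : algebraMap R S (b * u) ∈ (Ideal.ofList rs).map (algebraMap R S) :=
              Ideal.mem_map_of_mem _ (by simpa using this)
            simpa [Ideal.map_ofList] using h2
          simpa using hle ha
        rw [Submodule.Quotient.mk_eq_zero] at key
        have h3 : u ∈ ((Ideal.ofList rs).map (algebraMap R S)).comap (algebraMap R S) := by
          simpa [Ideal.map_ofList] using key
        rw [Ideal.comap_map_eq_self_of_faithfullyFlat] at h3
        simpa using h3)
    refine ⟨rs ++ [x], by simp [hl], ?_, ?_⟩
    · simp only [List.mem_append, List.mem_singleton]
      rintro a (ha | rfl)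
      exacts [hrm a ha, hx]
    · rw [isWeaklyRegular_append_iff]
      exact ⟨hreg, (isWeaklyRegular_singleton_iff _ _).mpr hxr⟩

end

section

variable {R : Type} [CommRing R] [IsLocalRing R] [IsNoetherianRing R] {n : ℕ}

theorem exists_nat_ringKrullDim (R : Type) [CommRing R] [IsLocalRing R] [IsNoetherianRing R] :
    ∃ d : ℕ, ringKrullDim R = d := by
  have h1 : ringKrullDim R ≠ ⊥ := ringKrullDim_ne_bot
  have h2 : ringKrullDim R ≠ ⊤ := ringKrullDim_ne_top
  obtain ⟨d, hd⟩ := WithBot.ne_bot_iff_exists.mp h1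
  rw [← hd] at h2 ⊢
  have h3 : d ≠ ⊤ := fun h => h2 (by rw [h]; rfl)
  obtain ⟨m, rfl⟩ := ENat.ne_top_iff_exists.mp h3
  exact ⟨m, rfl⟩

theorem le_depthIn (h : DepthGE R R n) : n ≤ depthIn R (maximalIdeal R) := by
  obtain ⟨rs, hl, hm, hr⟩ := h.exists_isRegular
  refine le_csSup ?_ ⟨rs, hl, hm, hr⟩
  obtain ⟨d, hd⟩ := exists_nat_ringKrullDim R
  refine ⟨d, ?_⟩
  rintro m ⟨ss, rfl, -, hreg⟩
  have h1 := ringKrullDim_add_length_eq_ringKrullDim_of_isRegular ss hreg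
  have : Nontrivial (R ⧸ Ideal.ofList ss) := by
    refine Ideal.Quotient.nontrivial_iff.mpr fun he => hreg.2 ?_
    rw [he, Submodule.top_smul]
  have := IsLocalRing.of_surjective' _ (Ideal.Quotient.mk_surjective (I := Ideal.ofList ss))
  obtain ⟨e, he⟩ := exists_nat_ringKrullDim (R ⧸ Ideal.ofList ss)
  rw [hd, he] at h1
  norm_cast at h1
  omega

theorem of_le_depthIn (h : n ≤ depthIn R (maximalIdeal R)) : DepthGE R R n := by
  rcases Nat.eq_zero_or_pos n with rfl | hn
  · exact fun i hi => absurd hi (by omega)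
  have hpos : 0 < depthIn R (maximalIdeal R) := by omega
  unfold depthIn at h hpos
  have hmem := Nat.sSup_mem (s := {n : ℕ | ∃ rs : List R, rs.length = n ∧
    (∀ r ∈ rs, r ∈ maximalIdeal R) ∧ IsRegular R rs}) (by
      by_contra he
      rw [Set.not_nonempty_iff_eq_empty] at he
      rw [he] at hpos
      simp at hpos) (by
      by_contra hb
      rw [Nat.sSup_of_not_bddAbove hb] at hpos
      exact absurd hpos (lt_irrefl _))
  obtain ⟨rs, hl, hm, hr⟩ := hmem
  exact of_isWeaklyRegular hm hr.1 (h.trans hl.ge)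

end

end DepthGE

section

variable {A B : Type} [CommRing A] [CommRing B]

theorem serreCondS_iff [IsNoetherianRing A] {ℓ : ℕ} :
    SerreCondS ℓ A ↔ ∀ (p : Ideal A) [p.IsPrime] (n : ℕ), n ≤ ℓ → (n : ℕ∞) ≤ p.height →
      DepthGE (Localization.AtPrime p) (Localization.AtPrime p) n := by
  have key (p : Ideal A) [p.IsPrime] (n : ℕ) : (n ≤ ℓ ∧ (n : ℕ∞) ≤ p.height) ↔
      ((n : ℕ∞) : WithBot ℕ∞) ≤
        min ((ℓ : ℕ∞) : WithBot ℕ∞) (ringKrullDim (Localization.AtPrime p)) := by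
    rw [le_min_iff, IsLocalization.AtPrime.ringKrullDim_eq_height p, WithBot.coe_le_coe,
      WithBot.coe_le_coe, Nat.cast_le]
  constructor
  · intro h p hp n hn hnp
    have := ((key p n).mp ⟨hn, hnp⟩).trans (h p hp)
    rw [WithBot.coe_le_coe, Nat.cast_le] at this
    exact .of_le_depthIn this
  · intro h p hp
    obtain ⟨d, hd⟩ := DepthGE.exists_nat_ringKrullDim (Localization.AtPrime p)
    have h2 := (key p (min ℓ d)).mpr (by rw [hd]; norm_cast)
    have h3 := (h p _ h2.1 h2.2).le_depthIn
    rw [hd, min_le_iff]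
    rcases min_le_iff.mp h3 with h4 | h4
    · left; exact_mod_cast h4
    · right; exact_mod_cast h4

theorem Localization.localRingHom_algebraMap_eq_zero_iff (f : A →+* B)
    (hf : Function.Surjective f) (P : Ideal A) [P.IsPrime] (Q : Ideal B) [Q.IsPrime]
    (h : P = Q.comap f) {a : A} :
    Localization.localRingHom P Q f h (algebraMap A _ a) = 0 ↔ ∃ t ∉ P, f (t * a) = 0 := by
  rw [Localization.localRingHom_to_map, IsLocalization.map_eq_zero_iff Q.primeCompl]
  constructor
  · rintro ⟨⟨t, ht⟩, h0⟩
    obtain ⟨t, rfl⟩ := hf t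
    exact ⟨t, by rw [h]; exact ht, by simpa using h0⟩
  · rintro ⟨t, ht, h0⟩
    exact ⟨⟨f t, by rw [h] at ht; exact ht⟩, by simpa using h0⟩

end

/-- A local ring whose maximal ideal is a direct sum of two nonzero ideals has depth at most
one. -/
theorem DepthGE.not_two_of_sup_eq_maximalIdeal {R : Type} [CommRing R] [IsLocalRing R]
    [IsNoetherianRing R] {I J : Ideal R} (hIJ : I * J = ⊥)
    (hsup : I ⊔ J = IsLocalRing.maximalIdeal R) (hI : I ≠ ⊥) (hJ : J ≠ ⊥) :
    ¬ DepthGE R R 2 := by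
  intro h
  have hmul {a b : R} (ha : a ∈ I) (hb : b ∈ J) : a * b = 0 := by
    simpa [hIJ] using Ideal.mul_mem_mul ha hb
  obtain ⟨rs, hl, hm, hr⟩ := h.exists_isRegular
  obtain ⟨z, y, rfl⟩ := List.length_eq_two.mp hl
  simp only [List.mem_cons, List.not_mem_nil, or_false, forall_eq_or_imp, forall_eq] at hm
  obtain ⟨hz, hy⟩ := hm
  obtain ⟨hzr, hw⟩ := (RingTheory.Sequence.isWeaklyRegular_cons_iff R z [y]).mp hr.1
  have hyr := ((RingTheory.Sequence.isWeaklyRegular_cons_iff _ y []).mp hw).1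
  have hzr' {a : R} (ha : z * a = 0) : a = 0 := hzr.right_eq_zero_of_smul ha
  have hyr' {a b : R} (ha : y * a = z * b) : ∃ c, a = z * c := by
    have h1 : (Submodule.Quotient.mk a : QuotSMulTop z R) = 0 := by
      refine hyr.right_eq_zero_of_smul ?_
      rw [← Submodule.Quotient.mk_smul, Submodule.Quotient.mk_eq_zero, smul_eq_mul, ha]
      exact Submodule.smul_mem_pointwise_smul b z ⊤ trivial
    rw [Submodule.Quotient.mk_eq_zero, Submodule.mem_smul_pointwise_iff_exists] at h1
    obtain ⟨c, -, hc⟩ := h1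
    exact ⟨c, hc.symm⟩
  rw [← hsup] at hz hy
  obtain ⟨a, ha, b, hb, rfl⟩ := Submodule.mem_sup.mp hz
  obtain ⟨i, hi, j, hj, rfl⟩ := Submodule.mem_sup.mp hy
  have hinf {e : R} (h1 : e ∈ I) (h2 : e ∈ J) : e = 0 :=
    hzr' (by rw [add_mul, hmul ha h2, mul_comm b, hmul h1 hb, add_zero])
  obtain ⟨c, hc⟩ := hyr' (a := a) (b := i) (by
    linear_combination -(hmul hi hb) + hmul ha hj)
  have hab : a * (1 - c) = 0 := by
    refine hinf (I.mul_mem_right _ ha) ?_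
    rw [show a * (1 - c) = c * b by linear_combination hc]
    exact J.mul_mem_left _ hb
  have hcb : c * b = 0 := by linear_combination hab - hc
  rcases IsLocalRing.isUnit_or_isUnit_one_sub_self c with hu | hu
  · have hb0 : b = 0 := (hu.mul_right_eq_zero).mp hcb
    refine hJ (eq_bot_iff.mpr fun e he => hzr' ?_)
    rw [hb0, add_zero, hmul ha he]
  · have ha0 : a = 0 := (hu.mul_left_eq_zero).mp hab
    refine hI (eq_bot_iff.mpr fun e he => hzr' ?_)
    rw [ha0, zero_add, mul_comm, hmul he hb]

section

variable {R : Type} [CommRing R] [IsLocalRing R]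

/-- Killing pairwise orthogonal elements `y` with `yR` of large depth does not lower the depth. -/
theorem DepthGE.quotient_span_image {ι : Type} [DecidableEq ι] (y : ι → R) (J : Finset ι) {n : ℕ}
    (horth : ∀ i ∈ J, ∀ j ∈ J, i ≠ j → y i * y j = 0)
    (hsq : ∀ i ∈ J, ∀ r, y i * (y i * r) = 0 → y i * r = 0)
    (hspan : ∀ i ∈ J, DepthGE R (Ideal.span {y i}) (n + 1)) (hR : DepthGE R R n) :
    DepthGE R (R ⧸ Ideal.span (y '' J)) n := by
  induction J using Finset.induction_on with
  | empty => exact hR.congr (Submodule.quotEquivOfEqBot _ (by simp)).symm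
  | insert j J hj ih =>
    have ih' := ih (fun a ha b hb => horth a (mem_insert_of_mem ha) b (mem_insert_of_mem hb))
      (fun a ha => hsq a (mem_insert_of_mem ha)) (fun a ha => hspan a (mem_insert_of_mem ha))
    set I := Ideal.span (y '' J) with hI
    have hII' : Ideal.span (y '' (insert j J : Finset ι)) = Ideal.span {y j} ⊔ I := by
      rw [coe_insert, Set.image_insert_eq, Ideal.span_insert]
    have hyI {z : R} (hz : z ∈ I) : y j * z = 0 := by
      have : I ≤ LinearMap.ker (LinearMap.lsmul R R (y j)) := by
        rw [hI, Ideal.span_le]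
        rintro _ ⟨i, hi, rfl⟩
        exact horth j (mem_insert_self _ _) i (mem_insert_of_mem hi) (by rintro rfl; exact hj hi)
      exact this hz
    refine DepthGE.of_exact ((Submodule.mkQ I).comp (Ideal.span {y j}).subtype)
      (Submodule.factor (hII' ▸ le_sup_right)) ?_ (Submodule.factor_surjective _) ?_
      (hspan j (mem_insert_self _ _)) ih'
    · rw [← LinearMap.ker_eq_bot, eq_bot_iff]
      rintro ⟨z, hz⟩ h0
      obtain ⟨r, rfl⟩ := Ideal.mem_span_singleton'.mp hz
      have h1 : r * y j ∈ I := (Submodule.Quotient.mk_eq_zero I).mp h0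
      have h2 := hsq j (mem_insert_self _ _) r (by linear_combination hyI h1)
      simpa [mul_comm] using h2
    · intro z
      obtain ⟨z, rfl⟩ := Submodule.mkQ_surjective _ z
      rw [Submodule.factor_mk, Submodule.mkQ_apply, Submodule.mkQ_apply,
        Submodule.Quotient.mk_eq_zero, hII']
      constructor
      · intro hz
        obtain ⟨a, ha, b, hb, rfl⟩ := Submodule.mem_sup.mp hz
        refine ⟨⟨a, ha⟩, (Submodule.Quotient.eq I).mpr ?_⟩
        simpa using hb
      · rintro ⟨⟨a, ha⟩, haz⟩
        have h1 := (Submodule.Quotient.eq I).mp haz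
        rw [Submodule.subtype_apply] at h1
        rw [show z = a - (a - z) by ring]
        exact sub_mem (Ideal.mem_sup_left ha) (Ideal.mem_sup_right h1)

end

section

open Polynomial IsLocalRing

variable {A C : Type} [CommRing A] [IsNoetherianRing A] [CommRing C] [IsNoetherianRing C]

/-- Along a surjection `ψ : A → C[X]` whose kernel is killed by an element `x` lying over `X`,
depth of `A` at the preimage of `P C[X]` passes to depth of `C` at `P`. -/
theorem DepthGE.of_comap_map_C (ψ : A →+* C[X]) (hψ : Function.Surjective ψ) {x : A}
    (hx : ψ x = X) (hker : ∀ a, ψ a = 0 → x * a = 0) (P : Ideal C) [P.IsPrime] {n : ℕ}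
    (h : DepthGE (Localization.AtPrime ((P.map Polynomial.C).comap ψ))
      (Localization.AtPrime ((P.map Polynomial.C).comap ψ)) n) :
    DepthGE (Localization.AtPrime P) (Localization.AtPrime P) n := by
  set 𝔓 : Ideal C[X] := P.map Polynomial.C with h𝔓
  have hx𝔓 : x ∉ 𝔓.comap ψ := by
    rw [Ideal.mem_comap, hx, h𝔓, Ideal.mem_map_C_iff]
    intro h1
    exact (Ideal.ne_top_iff_one P).mp Ideal.IsPrime.ne_top' (by simpa using h1 1)
  let f := Localization.localRingHom (𝔓.comap ψ) 𝔓 ψ rfl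
  let _ := f.toAlgebra
  have hf : Function.Surjective (algebraMap (Localization.AtPrime (𝔓.comap ψ))
    (Localization.AtPrime 𝔓)) := RingHom.surjective_localRingHom_of_surjective ψ hψ 𝔓
  have hf' : Function.Injective f := by
    rw [injective_iff_map_eq_zero]
    intro r hr
    obtain ⟨a, s, rfl⟩ := IsLocalization.exists_mk'_eq (𝔓.comap ψ).primeCompl r
    rw [IsLocalization.mk'_eq_zero_iff]
    have h1 : f (algebraMap A _ a) = 0 := by
      rw [← IsLocalization.mk'_spec (M := (𝔓.comap ψ).primeCompl) _ a s, map_mul, hr, zero_mul]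
    obtain ⟨t, ht, h0⟩ := (Localization.localRingHom_algebraMap_eq_zero_iff ψ hψ _ _ rfl).mp h1
    exact ⟨⟨x * t, (𝔓.comap ψ).primeCompl.mul_mem hx𝔓 ht⟩, by
      simpa [mul_assoc] using hker _ h0⟩
  have hD : DepthGE (Localization.AtPrime 𝔓) (Localization.AtPrime 𝔓) n := by
    rw [← DepthGE.iff_of_surjective hf]
    exact h.congr (LinearEquiv.ofBijective (Algebra.linearMap _ _) ⟨hf', hf⟩)
  have hP : P = 𝔓.comap Polynomial.C := by
    ext c
    rw [Ideal.mem_comap, h𝔓, Ideal.mem_map_C_iff]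
    constructor
    · intro hc m
      rw [coeff_C]
      split_ifs
      exacts [hc, zero_mem _]
    · intro hc
      simpa using hc 0
  let g := Localization.localRingHom P 𝔓 Polynomial.C hP
  let _ := g.toAlgebra
  have hflat : g.Flat := RingHom.Flat.localRingHom (by
    rw [← Polynomial.algebraMap_eq, RingHom.flat_algebraMap_iff]; infer_instance) 𝔓 P hP
  have : Module.Flat (Localization.AtPrime P) (Localization.AtPrime 𝔓) := hflat
  refine DepthGE.of_flat (S := Localization.AtPrime 𝔓) ?_ hD
  rw [← Localization.AtPrime.map_eq_maximalIdeal, ← Localization.AtPrime.map_eq_maximalIdeal,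
    Ideal.map_map]
  have hcomp : (algebraMap (Localization.AtPrime P) (Localization.AtPrime 𝔓)).comp
      (algebraMap C (Localization.AtPrime P)) =
      (algebraMap C[X] (Localization.AtPrime 𝔓)).comp Polynomial.C :=
    RingHom.ext fun c => Localization.localRingHom_to_map _ _ _ hP c
  rw [hcomp, ← Ideal.map_map]

omit [IsNoetherianRing A] in
theorem Localization.AtPrime.algebraMap_eq_zero_iff (Q : Ideal A) [Q.IsPrime] {a : A} :
    algebraMap A (Localization.AtPrime Q) a = 0 ↔ ∃ t ∉ Q, t * a = 0 := by
  rw [IsLocalization.map_eq_zero_iff Q.primeCompl]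
  exact ⟨fun ⟨t, ht⟩ => ⟨t, t.2, ht⟩, fun ⟨t, ht, h⟩ => ⟨⟨t, ht⟩, h⟩⟩

omit [IsNoetherianRing A] in
theorem Localization.AtPrime.exists_mul_eq (Q : Ideal A) [Q.IsPrime]
    (r : Localization.AtPrime Q) :
    ∃ (u : Localization.AtPrime Q) (a : A), IsUnit u ∧ r = u * algebraMap A _ a := by
  obtain ⟨a, s, rfl⟩ := IsLocalization.exists_mk'_eq Q.primeCompl r
  obtain ⟨u, hu⟩ := IsLocalization.map_units (Localization.AtPrime Q) s
  refine ⟨↑u⁻¹, a, Units.isUnit _, ?_⟩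
  rw [← IsLocalization.mk'_spec (Localization.AtPrime Q) a s, ← hu, mul_comm, mul_assoc,
    Units.mul_inv, mul_one]

omit [IsNoetherianRing A] [IsNoetherianRing C] in
theorem mul_eq_zero_of_mul_mul_eq_zero_of_X {ψ : A →+* C[X]} {x : A}
    (hx : ψ x = X) (hker : ∀ a, ψ a = 0 → x * a = 0) (Q : Ideal A) [Q.IsPrime]
    {r : Localization.AtPrime Q} (hr : algebraMap A _ x * (algebraMap A _ x * r) = 0) :
    algebraMap A _ x * r = 0 := by
  obtain ⟨u, a, hu, rfl⟩ := Localization.AtPrime.exists_mul_eq Q r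
  have h1 : algebraMap A (Localization.AtPrime Q) (x * (x * a)) = 0 := by
    refine (hu.mul_right_eq_zero).mp ?_
    rw [← hr, map_mul, map_mul]
    ring
  obtain ⟨t, ht, h2⟩ := (Localization.AtPrime.algebraMap_eq_zero_iff Q).mp h1
  have h3 : ψ (t * a) = 0 := by
    have h4 : X * (X * ψ (t * a)) = 0 := by
      rw [← hx, ← map_mul, ← map_mul, ← map_zero ψ, ← h2]
      congr 1
      ring
    simpa using h4
  have h5 : algebraMap A (Localization.AtPrime Q) (x * a) = 0 :=
    (Localization.AtPrime.algebraMap_eq_zero_iff Q).mpr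
      ⟨t, ht, by linear_combination hker _ h3⟩
  rw [map_mul] at h5
  linear_combination u * h5

theorem DepthGE.span_singleton_of_surjective {R T : Type} [CommRing R] [IsLocalRing R]
    [IsNoetherianRing R] [CommRing T] [IsLocalRing T] [IsNoetherianRing T] [Algebra R T]
    (hs : Function.Surjective (algebraMap R T)) {y : R} (hym : y ∈ maximalIdeal R)
    (hsq : ∀ r, y * (y * r) = 0 → y * r = 0)
    (hker : ∀ r, algebraMap R T r = 0 ↔ ∃ b, y * r = y * (y * b)) {n : ℕ}
    (h : DepthGE T T n) : DepthGE R (Ideal.span {y}) (n + 1) := by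
  let I := Ideal.span {y}
  let g : R →ₗ[R] QuotSMulTop y I :=
    (Submodule.mkQ _).comp (LinearMap.toSpanSingleton R I ⟨y, Ideal.mem_span_singleton_self y⟩)
  have hg : Function.Surjective g := by
    intro z
    obtain ⟨⟨z, hz⟩, rfl⟩ := Submodule.mkQ_surjective _ z
    obtain ⟨r, rfl⟩ := Ideal.mem_span_singleton'.mp hz
    exact ⟨r, rfl⟩
  have hgker (r : R) : g r = 0 ↔ ∃ b, y * r = y * (y * b) := by
    change Submodule.Quotient.mk _ = _ ↔ _
    rw [Submodule.Quotient.mk_eq_zero, Submodule.mem_smul_pointwise_iff_exists]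
    constructor
    · rintro ⟨⟨z, hz⟩, -, h1⟩
      obtain ⟨b, rfl⟩ := Ideal.mem_span_singleton'.mp hz
      have h2 := congrArg Subtype.val h1
      change y * (b * y) = r * y at h2
      exact ⟨b, by linear_combination -h2⟩
    · rintro ⟨b, hb⟩
      refine ⟨⟨b * y, Ideal.mem_span_singleton'.mpr ⟨b, rfl⟩⟩, trivial, Subtype.ext ?_⟩
      change y * (b * y) = r * y
      linear_combination -hb
  have hkk : LinearMap.ker (Algebra.linearMap R T) = LinearMap.ker g := by
    ext r
    exact (hker r).trans (hgker r).symm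
  have e : T ≃ₗ[R] QuotSMulTop y I :=
    ((Algebra.linearMap R T).quotKerEquivOfSurjective hs).symm.trans
      ((Submodule.quotEquivOfEq _ _ hkk).trans (g.quotKerEquivOfSurjective hg))
  refine DepthGE.succ_of_quotSMulTop hym ?_ (((DepthGE.iff_of_surjective hs).mpr h).congr e)
  refine (isSMulRegular_iff_right_eq_zero_of_smul).mpr ?_
  rintro ⟨z, hz⟩ h0
  obtain ⟨r, rfl⟩ := Ideal.mem_span_singleton'.mp hz
  have h1 := congrArg Subtype.val h0
  change y * (r * y) = 0 at h1
  refine Subtype.ext ?_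
  change r * y = 0
  linear_combination hsq r (by linear_combination h1)

omit [IsNoetherianRing A] [IsNoetherianRing C] in
theorem Localization.localRingHom_surjective (f : A →+* C) (hf : Function.Surjective f)
    (P : Ideal A) [P.IsPrime] (Q : Ideal C) [Q.IsPrime] (h : P = Q.comap f) :
    Function.Surjective (Localization.localRingHom P Q f h) := by
  subst h
  exact RingHom.surjective_localRingHom_of_surjective f hf Q

theorem DepthGE.span_singleton (ψ : A →+* C[X]) (hψ : Function.Surjective ψ) {x : A}
    (hx : ψ x = X) (hker : ∀ a, ψ a = 0 → x * a = 0)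
    (Q : Ideal A) [Q.IsPrime] (hxQ : x ∈ Q) {n : ℕ}
    (h : ∀ (P : Ideal C) [P.IsPrime], P.comap ((evalRingHom 0).comp ψ) = Q →
      DepthGE (Localization.AtPrime ((P.map Polynomial.C).comap ψ))
        (Localization.AtPrime ((P.map Polynomial.C).comap ψ)) n) :
    DepthGE (Localization.AtPrime Q)
      (Ideal.span {algebraMap A (Localization.AtPrime Q) x}) (n + 1) := by
  set ρ := (evalRingHom 0).comp ψ with hρ
  have hρs : Function.Surjective ρ := (eval_surjective 0).comp hψ
  have hρker {a : A} (ha : ρ a = 0) : ∃ b, x * a = x * x * b := by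
    have h1 : (X : C[X]) ∣ ψ a := by
      rw [X_dvd_iff, coeff_zero_eq_eval_zero]
      exact ha
    obtain ⟨b, hb⟩ := h1
    obtain ⟨b, rfl⟩ := hψ b
    refine ⟨b, ?_⟩
    have := hker (a - x * b) (by rw [map_sub, hb, map_mul, hx, sub_self])
    linear_combination this
  set R := Localization.AtPrime Q
  set y := algebraMap A R x with hy
  have hym : y ∈ maximalIdeal R := by
    rw [← Localization.AtPrime.map_eq_maximalIdeal]
    exact Ideal.mem_map_of_mem _ hxQ
  have hsq {r : R} (hr : y * (y * r) = 0) : y * r = 0 :=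
    mul_eq_zero_of_mul_mul_eq_zero_of_X hx hker Q hr
  by_cases hQ : RingHom.ker ρ ≤ Q
  · have hcm : (Q.map ρ).comap ρ = Q := by
      rw [Ideal.comap_map_of_surjective' _ hρs, sup_eq_left.mpr hQ]
    have : (Q.map ρ).IsPrime := Ideal.map_isPrime_of_surjective hρs hQ
    have hC := DepthGE.of_comap_map_C ψ hψ hx hker (Q.map ρ) (h _ hcm)
    let f := Localization.localRingHom Q (Q.map ρ) ρ hcm.symm
    let _ := f.toAlgebra
    refine DepthGE.span_singleton_of_surjective
      (Localization.localRingHom_surjective ρ hρs Q _ hcm.symm) hym (fun r => hsq) (fun r => ?_) hC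
    change f r = 0 ↔ _
    constructor
    · obtain ⟨u, a, hu, rfl⟩ := Localization.AtPrime.exists_mul_eq Q r
      rw [map_mul, (hu.map f).mul_right_eq_zero,
        Localization.localRingHom_algebraMap_eq_zero_iff ρ hρs]
      rintro ⟨t, ht, h0⟩
      obtain ⟨b, hb⟩ := hρker h0
      have hb' := congrArg (algebraMap A R) hb
      simp only [map_mul] at hb'
      obtain ⟨v, hv⟩ := (IsLocalization.map_units R (⟨t, ht⟩ : Q.primeCompl)).exists_left_inv
      refine ⟨v * u * algebraMap A R b, ?_⟩
      change v * algebraMap A R t = 1 at hv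
      linear_combination (v * u) * hb' - y * u * algebraMap A R a * hv
    · rintro ⟨b, hb⟩
      have hfy : f y = 0 := by
        rw [hy, Localization.localRingHom_to_map]
        simp [hρ, hx]
      have key {r : R} (hr : y * r = 0) : f r = 0 := by
        obtain ⟨u, a, hu, rfl⟩ := Localization.AtPrime.exists_mul_eq Q r
        rw [map_mul, (hu.map f).mul_right_eq_zero,
          Localization.localRingHom_algebraMap_eq_zero_iff ρ hρs]
        have h1 : algebraMap A R (x * a) = 0 := by
          rw [map_mul]
          exact hu.mul_right_eq_zero.mp (by rw [← hr]; ring)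
        obtain ⟨t, ht, h2⟩ := (Localization.AtPrime.algebraMap_eq_zero_iff Q).mp h1
        refine ⟨t, ht, ?_⟩
        have h3 : X * ψ (t * a) = 0 := by
          rw [← hx, ← map_mul, ← map_zero ψ, ← h2]
          congr 1
          ring
        have h4 : ψ (t * a) = 0 := by simpa using h3
        rw [hρ, RingHom.comp_apply, h4, map_zero]
      have := key (r := r - y * b) (by linear_combination hb)
      rwa [map_sub, map_mul, hfy, zero_mul, sub_zero] at this
  · obtain ⟨a, ha, haQ⟩ := SetLike.not_le_iff_exists.mp hQ
    obtain ⟨b, hb⟩ := hρker ha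
    have hb' := congrArg (algebraMap A R) hb
    simp only [map_mul] at hb'
    have hu : IsUnit (algebraMap A R a - y * algebraMap A R b) := by
      have h1 := IsLocalization.map_units R (⟨a, haQ⟩ : Q.primeCompl)
      by_contra h2
      have h3 := (maximalIdeal R).add_mem ((mem_maximalIdeal _).mpr h2)
        ((maximalIdeal R).mul_mem_right (algebraMap A R b) hym)
      rw [sub_add_cancel] at h3
      exact (mem_maximalIdeal _).mp h3 h1
    have hy0 : y = 0 := hu.mul_left_eq_zero.mp (by linear_combination hb')
    have : Subsingleton (Ideal.span {y}) := by
      rw [hy0, Ideal.span_singleton_eq_bot.mpr rfl]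
      infer_instance
    exact DepthGE.of_subsingleton

end

namespace SComplex

open MvPolynomial

variable {V : Type} [DecidableEq V] (k : Type) [Field k] (K : SComplex V)

/-- The class of the variable `v` in the Stanley–Reisner ring. -/
noncomputable def srX (v : V) : SRRing k K := Ideal.Quotient.mk (srIdeal k K) (X v)

variable {k K}

theorem srIdeal_le_iff {I : Ideal (MvPolynomial V k)} :
    srIdeal k K ≤ I ↔ ∀ s ∉ K.faces, ∏ v ∈ s, X v ∈ I := by
  rw [srIdeal, Ideal.span_le, Set.image_subset_iff]
  rfl

theorem srIdeal_le_iff_of_isPrime {I : Ideal (MvPolynomial V k)} [I.IsPrime] :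
    srIdeal k K ≤ I ↔ ∀ s : Finset V, (∀ v ∈ s, X v ∉ I) → s ∈ K.faces := by
  rw [srIdeal_le_iff]
  refine forall_congr' fun s => ?_
  rw [Ideal.IsPrime.prod_mem_iff]
  constructor
  · intro h h'
    by_contra hs
    obtain ⟨v, hv, hm⟩ := h hs
    exact h' v hv hm
  · intro h hs
    by_contra! h'
    exact hs (h h')

theorem prod_srX_eq_zero {s : Finset V} (hs : s ∉ K.faces) : ∏ v ∈ s, srX k K v = 0 := by
  have h := Ideal.Quotient.eq_zero_iff_mem.mpr (srIdeal_le_iff.mp le_rfl s hs :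
    ∏ v ∈ s, X v ∈ srIdeal k K)
  rwa [map_prod] at h

theorem srRingHom_ext {B : Type} [Semiring B] {f g : SRRing k K →+* B}
    (hC : ∀ c : k, f (Ideal.Quotient.mk _ (C c)) = g (Ideal.Quotient.mk _ (C c)))
    (hX : ∀ v, f (srX k K v) = g (srX k K v)) : f = g :=
  Ideal.Quotient.ringHom_ext (MvPolynomial.ringHom_ext hC hX)

variable (K) in
theorem srX_induction {p : SRRing k K → Prop} (hC : ∀ c, p (Ideal.Quotient.mk _ (C c)))
    (hadd : ∀ a b, p a → p b → p (a + b)) (hmul : ∀ a v, p a → p (a * srX k K v)) (a) : p a := by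
  obtain ⟨a, rfl⟩ := Ideal.Quotient.mk_surjective a
  induction a using MvPolynomial.induction_on with
  | C c => exact hC c
  | add a b ha hb => rw [map_add]; exact hadd _ _ ha hb
  | mul_X a v ha => rw [map_mul]; exact hmul _ v ha

variable (K) in
/-- The ring homomorphism out of a Stanley–Reisner ring determined by the images of the
variables. -/
noncomputable def srLift {B : Type} [CommRing B] (c : k →+* B) (x : V → B)
    (h : ∀ s ∉ K.faces, ∏ v ∈ s, x v = 0) : SRRing k K →+* B :=
  Ideal.Quotient.lift _ (eval₂Hom c x) fun a ha => by
    have : srIdeal k K ≤ RingHom.ker (eval₂Hom c x) := by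
      rw [srIdeal_le_iff]
      intro s hs
      rw [RingHom.mem_ker, map_prod]
      simpa using h s hs
    exact this ha

section

variable {B : Type} [CommRing B] (c : k →+* B) (x : V → B)
  (h : ∀ s ∉ K.faces, ∏ v ∈ s, x v = 0)

@[simp]
theorem srLift_mk (p : MvPolynomial V k) :
    srLift K c x h (Ideal.Quotient.mk _ p) = eval₂Hom c x p := rfl

@[simp]
theorem srLift_srX (v : V) : srLift K c x h (srX k K v) = x v := by
  simp [srX]

end

instance : IsNoetherianRing (SRRing k K) := by
  let W := K.faces.sup id
  let f : MvPolynomial W k →+* SRRing k K :=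
    eval₂Hom ((Ideal.Quotient.mk _).comp C) fun w => srX k K w
  refine isNoetherianRing_of_surjective _ _ f fun a => ?_
  refine srX_induction K (p := fun a => ∃ b, f b = a) (fun c => ⟨C c, by simp [f]⟩) ?_ ?_ a
  · rintro _ _ ⟨a, rfl⟩ ⟨b, rfl⟩
    exact ⟨a + b, map_add _ _ _⟩
  · rintro _ v ⟨a, rfl⟩
    by_cases hv : v ∈ W
    · exact ⟨a * X ⟨v, hv⟩, by simp [f]⟩
    · refine ⟨0, ?_⟩
      have h1 : ({v} : Finset V) ∉ K.faces := fun h =>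
        hv (Finset.mem_sup.mpr ⟨{v}, h, by simp⟩)
      have h2 := prod_srX_eq_zero (k := k) h1
      rw [prod_singleton] at h2
      rw [h2, map_zero, mul_zero]

/-! ### Face primes -/

theorem coeff_restrict {F : Finset V} {m : V →₀ ℕ} (hm : m.support ⊆ F)
    (p : MvPolynomial V k) :
    coeff m (eval₂Hom C (fun v => if v ∈ F then (X v : MvPolynomial V k) else 0) p) =
      coeff m p := by
  induction p using MvPolynomial.induction_on' with
  | monomial u a =>
    rw [coe_eval₂Hom, eval₂_monomial]
    by_cases hu : u.support ⊆ F
    · congr 1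
      rw [monomial_eq]
      congr 1
      refine Finsupp.prod_congr fun v hv => ?_
      rw [if_pos (hu hv)]
    · obtain ⟨v, hv, hvF⟩ := Finset.not_subset.mp hu
      have h1 : (u.prod fun v e => (if v ∈ F then (X v : MvPolynomial V k) else 0) ^ e) = 0 := by
        refine Finset.prod_eq_zero hv ?_
        simp only [if_neg hvF]
        exact zero_pow (Finsupp.mem_support_iff.mp hv)
      rw [h1, mul_zero, coeff_zero, coeff_monomial, if_neg]
      rintro rfl
      exact hu hm
  | add p q hp hq => rw [map_add, coeff_add, coeff_add, hp, hq]

/-- Restriction of the Stanley–Reisner ring to a face: the variables off `F` are sent to `0`. -/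
noncomputable def faceHom {F : Finset V} (hF : F ∈ K.faces) : SRRing k K →+* MvPolynomial V k :=
  srLift K C (fun v => if v ∈ F then X v else 0) fun s hs => by
    obtain ⟨v, hv, hvF⟩ := Finset.not_subset.mp fun h => hs (K.down_closed hF h)
    exact Finset.prod_eq_zero hv (if_neg hvF)

theorem eq_zero_of_faceHom_eq_zero {a : SRRing k K}
    (h : ∀ F (hF : F ∈ K.faces), faceHom hF a = 0) : a = 0 := by
  obtain ⟨p, rfl⟩ := Ideal.Quotient.mk_surjective a
  rw [Ideal.Quotient.eq_zero_iff_mem]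
  have himg : srIdeal k K = Ideal.span ((fun m : V →₀ ℕ => monomial m (1 : k)) ''
      ((fun s : Finset V => ∑ v ∈ s, Finsupp.single v 1) '' {s | s ∉ K.faces})) := by
    rw [srIdeal, Set.image_image]
    congr 1
    refine Set.image_congr fun s _ => ?_
    rw [monomial_sum_one]
    rfl
  rw [himg, mem_ideal_span_monomial_image]
  intro m hm
  have hmF : m.support ∉ K.faces := by
    intro hF
    have h1 := h _ hF
    rw [faceHom, srLift_mk] at h1
    have h2 := coeff_restrict (k := k) (Finset.Subset.refl m.support) p
    rw [h1, coeff_zero] at h2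
    exact (mem_support_iff.mp hm) h2.symm
  refine ⟨_, ⟨m.support, hmF, rfl⟩, fun v => ?_⟩
  rw [Finsupp.finsetSum_apply]
  simp only [Finsupp.single_apply, Finset.sum_ite_eq']
  split_ifs with hv
  · exact Nat.one_le_iff_ne_zero.mpr (Finsupp.mem_support_iff.mp hv)
  · exact Nat.zero_le _

instance : IsReduced (SRRing k K) := by
  refine ⟨fun a ha => eq_zero_of_faceHom_eq_zero fun F hF => ?_⟩
  exact (ha.map (faceHom hF)).eq_zero

variable (k K) in
/-- The prime of the Stanley–Reisner ring generated by the variables off a face. -/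
noncomputable def facePrime (F : Finset V) : Ideal (SRRing k K) :=
  Ideal.span (srX k K '' {v | v ∉ F})

theorem mem_facePrime_iff {F : Finset V} (hF : F ∈ K.faces) {a : SRRing k K} :
    a ∈ facePrime k K F ↔ faceHom hF a = 0 := by
  constructor
  · intro ha
    have : facePrime k K F ≤ RingHom.ker (faceHom hF) := by
      rw [facePrime, Ideal.span_le]
      rintro _ ⟨v, hv, rfl⟩
      simpa [faceHom] using hv
    exact this ha
  · intro ha
    have h1 : ((Ideal.Quotient.mk (facePrime k K F)).comp (Ideal.Quotient.mk (srIdeal k K))).comp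
        (faceHom hF) = Ideal.Quotient.mk (facePrime k K F) := by
      refine srRingHom_ext (fun c => ?_) fun v => ?_
      · simp [faceHom]
      · rw [faceHom, RingHom.comp_apply, srLift_srX]
        split_ifs with hv
        · rfl
        · rw [map_zero, eq_comm, Ideal.Quotient.eq_zero_iff_mem]
          exact Ideal.subset_span ⟨v, hv, rfl⟩
    rw [← Ideal.Quotient.eq_zero_iff_mem, ← h1, RingHom.comp_apply, ha, map_zero]

theorem facePrime_isPrime {F : Finset V} (hF : F ∈ K.faces) : (facePrime k K F).IsPrime := by
  have : facePrime k K F = RingHom.ker (faceHom (k := k) hF) := by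
    ext a
    exact mem_facePrime_iff hF
  rw [this]
  exact RingHom.ker_isPrime _

theorem srX_mem_facePrime_iff {F : Finset V} (hF : F ∈ K.faces) {v : V} :
    srX k K v ∈ facePrime k K F ↔ v ∉ F := by
  rw [mem_facePrime_iff hF, faceHom, srLift_srX]
  split_ifs with h <;> simp [h, X_ne_zero]

theorem facePrime_anti {F G : Finset V} (h : F ⊆ G) : facePrime k K G ≤ facePrime k K F :=
  Ideal.span_mono (Set.image_mono fun _ hv hF => hv (h hF))

theorem facePrime_lt {F G : Finset V} (hG : G ∈ K.faces) (h : F ⊂ G) :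
    facePrime k K G < facePrime k K F := by
  refine lt_of_le_of_ne (facePrime_anti h.1) fun he => ?_
  obtain ⟨v, hv, hvF⟩ := Finset.exists_of_ssubset h
  have h1 := (srX_mem_facePrime_iff (k := k) (K.down_closed hG h.1)).mpr hvF
  rw [← he, srX_mem_facePrime_iff hG] at h1
  exact h1 hv

theorem prod_srX_notMem_facePrime {F : Finset V} (hF : F ∈ K.faces) :
    ∏ v ∈ F, srX k K v ∉ facePrime k K F := by
  have := facePrime_isPrime (k := k) hF
  rw [Ideal.IsPrime.prod_mem_iff]
  rintro ⟨v, hv, h⟩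
  exact (srX_mem_facePrime_iff hF).mp h hv

end SComplex

theorem exists_ringHom_eq_zero_iff {A : Type} [CommRing A] (x : A) :
    ∃ (B : Type) (_ : CommRing B) (π : A →+* B), ∀ a, π a = 0 ↔ x * a = 0 := by
  refine ⟨A ⧸ Ideal.torsionOf A A x, inferInstance, Ideal.Quotient.mk _, fun a => ?_⟩
  rw [Ideal.Quotient.eq_zero_iff_mem, Ideal.mem_torsionOf_iff, smul_eq_mul, mul_comm]

theorem Localization.AtPrime.maximalIdeal_eq_span_image {A ι : Type} [CommRing A] (x : ι → A)
    (S : Set ι) (p : Ideal A) [p.IsPrime] (h : p = Ideal.span (x '' S)) :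
    IsLocalRing.maximalIdeal (Localization.AtPrime p) =
      Ideal.span ((fun i => algebraMap A (Localization.AtPrime p) (x i)) '' S) := by
  rw [← Localization.AtPrime.map_eq_maximalIdeal]
  have := Ideal.map_span (algebraMap A (Localization.AtPrime p)) (x '' S)
  rwa [Set.image_image, ← h] at this

namespace SComplex

open MvPolynomial

variable {V : Type} [DecidableEq V] {k : Type} [Field k] {K : SComplex V}

theorem mem_link_iff {j : V} {s : Finset V} :
    s ∈ (K.link {j}).faces ↔ j ∉ s ∧ insert j s ∈ K.faces := by
  simp only [link, mem_filter, disjoint_singleton_left]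
  exact ⟨fun h => h.2, fun h => ⟨K.down_closed h.2 (subset_insert _ _), h⟩⟩

theorem mem_antistar_iff {J s : Finset V} :
    s ∈ (K.antistar J).faces ↔ s ∈ K.faces ∧ Disjoint J s := mem_filter

/-! ### The star of a vertex -/

theorem srX_link_self (j : V) : srX k (K.link {j}) j = 0 := by
  have h := prod_srX_eq_zero (k := k) (K := K.link {j}) (s := {j})
    (fun h => (mem_link_iff.mp h).1 (mem_singleton_self j))
  rwa [prod_singleton] at h

variable (k K) in
/-- The projection of `k[Δ]` onto the Stanley–Reisner ring of the star of `j`, which is a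
polynomial ring in `x_j` over the Stanley–Reisner ring of the link of `j`. -/
noncomputable def starHom (j : V) : SRRing k K →+* Polynomial (SRRing k (K.link {j})) :=
  srLift K (Polynomial.C.comp ((Ideal.Quotient.mk _).comp C))
    (fun v => if v = j then Polynomial.X else Polynomial.C (srX k _ v)) fun s hs => by
      have key (t : Finset V) (ht : t ∉ (K.link {j}).faces) (hj : j ∉ t) :
          ∏ v ∈ t, (if v = j then Polynomial.X else Polynomial.C (srX k (K.link {j}) v)) = 0 := by
        rw [prod_congr rfl fun v hv => if_neg (by rintro rfl; exact hj hv), ← map_prod,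
          prod_srX_eq_zero ht, map_zero]
      by_cases hj : j ∈ s
      · rw [← mul_prod_erase s _ hj, key (s.erase j) _ (notMem_erase j s), mul_zero]
        rw [mem_link_iff, insert_erase hj]
        exact fun h => hs h.2
      · exact key s (fun h => hs (K.down_closed (mem_link_iff.mp h).2 (subset_insert _ _))) hj

theorem starHom_self (j : V) : starHom k K j (srX k K j) = Polynomial.X := by
  simp [starHom]

theorem starHom_of_ne {j v : V} (h : v ≠ j) :
    starHom k K j (srX k K v) = Polynomial.C (srX k _ v) := by
  simp [starHom, h]

theorem starHom_C (j : V) (c : k) : starHom k K j (Ideal.Quotient.mk _ (C c)) =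
    Polynomial.C (Ideal.Quotient.mk _ (C c)) := by
  simp [starHom]

theorem starHom_surjective (j : V) : Function.Surjective (starHom k K j) := by
  intro p
  induction p using Polynomial.induction_on with
  | C a =>
    refine srX_induction (K.link {j})
      (p := fun a => ∃ b, starHom k K j b = Polynomial.C a) ?_ ?_ ?_ a
    · exact fun c => ⟨_, starHom_C j c⟩
    · rintro a b ⟨a', ha⟩ ⟨b', hb⟩
      exact ⟨a' + b', by rw [map_add, map_add, ha, hb]⟩
    · rintro a v ⟨a', ha⟩
      rcases eq_or_ne v j with rfl | hv
      · exact ⟨0, by rw [srX_link_self, map_zero, mul_zero, map_zero]⟩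
      · exact ⟨a' * srX k K v, by rw [map_mul, map_mul, ha, starHom_of_ne hv]⟩
  | add p q hp hq =>
    obtain ⟨p, rfl⟩ := hp
    obtain ⟨q, rfl⟩ := hq
    exact ⟨p + q, map_add _ _ _⟩
  | monomial n a h =>
    obtain ⟨b, hb⟩ := h
    exact ⟨b * srX k K j, by rw [map_mul, hb, starHom_self]; ring⟩

theorem mul_eq_zero_of_starHom_eq_zero {j : V} {a : SRRing k K} (ha : starHom k K j a = 0) :
    srX k K j * a = 0 := by
  obtain ⟨B, _, π, hπ⟩ := exists_ringHom_eq_zero_iff (srX k K j)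
  have hlink (s : Finset V) (hs : s ∉ (K.link {j}).faces) :
      ∏ v ∈ s, (if v = j then 0 else π (srX k K v)) = 0 := by
    by_cases hj : j ∈ s
    · rw [← mul_prod_erase s _ hj, if_pos rfl, zero_mul]
    · rw [prod_congr rfl fun v hv => if_neg (by rintro rfl; exact hj hv), ← map_prod, hπ,
        ← prod_insert (f := srX k K) hj]
      exact prod_srX_eq_zero fun h => hs (mem_link_iff.mpr ⟨hj, h⟩)
  let θ₀ : SRRing k (K.link {j}) →+* B :=
    srLift _ (π.comp ((Ideal.Quotient.mk _).comp C))
      (fun v => if v = j then 0 else π (srX k K v)) hlink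
  let θ := Polynomial.eval₂RingHom θ₀ (π (srX k K j))
  have hθ : θ.comp (starHom k K j) = π := by
    refine srRingHom_ext (fun c => ?_) fun v => ?_
    · rw [RingHom.comp_apply, starHom_C]
      simp [θ, θ₀]
    · rcases eq_or_ne v j with rfl | hv
      · simp [θ, starHom_self]
      · simp [θ, θ₀, starHom_of_ne hv, hv]
  rw [← hπ, ← hθ, RingHom.comp_apply, ha, map_zero]

theorem eval_starHom_mk (j : V) (p : MvPolynomial V k) :
    Polynomial.eval 0 (starHom k K j (Ideal.Quotient.mk _ p)) =
      Ideal.Quotient.mk (srIdeal k (K.link {j})) p := by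
  have : ((Polynomial.evalRingHom 0).comp (starHom k K j)).comp (Ideal.Quotient.mk _) =
      Ideal.Quotient.mk (srIdeal k (K.link {j})) := by
    refine MvPolynomial.ringHom_ext (fun c => ?_) fun v => ?_
    · simp [starHom_C]
    · change Polynomial.eval 0 (starHom k K j (srX k K v)) = srX k _ v
      rcases eq_or_ne v j with rfl | hv
      · rw [starHom_self, Polynomial.eval_X, srX_link_self]
      · rw [starHom_of_ne hv, Polynomial.eval_C]
  exact congrArg (fun f => f p) this

/-! ### Purity from the second Serre condition -/

theorem exists_isFacet_superset {F : Finset V} (hF : F ∈ K.faces) :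
    ∃ H, K.IsFacet H ∧ F ⊆ H := by
  obtain ⟨H, hFH, hH⟩ := K.faces.exists_le_maximal hF
  exact ⟨H, ⟨hH.1, fun G hG h => subset_antisymm h (hH.2 hG h)⟩, hFH⟩

theorem two_le_height_facePrime {F G : Finset V} (hG : G ∈ K.faces) (hFG : F ⊆ G)
    (h : F.card + 2 ≤ G.card) : 2 ≤ (facePrime k K F).height := by
  obtain ⟨E, hFE, hEG, hE⟩ := Finset.exists_subsuperset_card_eq hFG (n := F.card + 1)
    (by omega) (by omega)
  have hFE' : F ⊂ E := ⟨hFE, fun h' => by have := card_le_card h'; omega⟩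
  have hEG' : E ⊂ G := ⟨hEG, fun h' => by have := card_le_card h'; omega⟩
  have hEK := K.down_closed hG hEG
  have h1 := facePrime_isPrime (k := k) hG
  have h2 := facePrime_isPrime (k := k) hEK
  have h3 := facePrime_isPrime (k := k) (K.down_closed hG hFG)
  have h4 := Ideal.height_add_one_le_of_lt_of_isPrime (facePrime_lt (k := k) hG hEG')
  have h5 := Ideal.height_add_one_le_of_lt_of_isPrime (facePrime_lt (k := k) hEK hFE')
  calc (2 : ℕ∞) = 0 + 1 + 1 := by norm_num
    _ ≤ (facePrime k K G).height + 1 + 1 := by gcongr; exact bot_le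
    _ ≤ _ := le_trans (by gcongr) h5

theorem card_eq_of_serreS {ℓ : ℕ} (hℓ : 2 ≤ ℓ) (hS : SerreS k ℓ K) {H H' : Finset V}
    (hH : K.IsFacet H) (hH' : K.IsFacet H') : H.card = H'.card := by
  suffices ∀ n, ∀ F ∈ K.faces, (∀ G ∈ K.faces, F ⊆ G → G.card ≤ F.card + n) →
      ∀ H H', K.IsFacet H → K.IsFacet H' → F ⊆ H → F ⊆ H' → H.card = H'.card from
    this K.rank ∅ (K.down_closed hH.1 (empty_subset _))
      (fun G hG _ => by
        rw [card_empty, zero_add]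
        exact Finset.le_sup (f := Finset.card) hG) H H' hH hH'
      (empty_subset _) (empty_subset _)
  intro n
  induction n with
  | zero =>
    intro F hF hn H H' hH hH' hFH hFH'
    rw [← eq_of_subset_of_card_le hFH (hn H hH.1 hFH),
      ← eq_of_subset_of_card_le hFH' (hn H' hH'.1 hFH')]
  | succ n ih =>
    intro F hF hn H H' hH hH' hFH hFH'
    by_contra hne
    have ih' {u : V} (hu : u ∉ F) {E E' : Finset V} (hE : K.IsFacet E) (hE' : K.IsFacet E')
        (h : insert u F ⊆ E) (h' : insert u F ⊆ E') : E.card = E'.card := by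
      refine ih (insert u F) (K.down_closed hE.1 h) (fun G hG hFG => ?_) E E' hE hE' h h'
      have := hn G hG ((subset_insert _ _).trans hFG)
      rw [card_insert_of_notMem hu]
      omega
    let U : Set V := {u | u ∉ F ∧ ∃ E, K.IsFacet E ∧ insert u F ⊆ E ∧ E.card = H.card}
    let U' : Set V := {u | u ∉ F ∧ ∃ E, K.IsFacet E ∧ insert u F ⊆ E ∧ E.card ≠ H.card}
    have hUU' {u w : V} (hu : u ∈ U) (hw : w ∈ U') : insert u (insert w F) ∉ K.faces := by
      obtain ⟨huF, E, hE, huE, hEH⟩ := hu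
      obtain ⟨hwF, E', hE', hwE', hEH'⟩ := hw
      intro h
      obtain ⟨D, hD, hsub⟩ := exists_isFacet_superset h
      refine hEH' ?_
      rw [← hEH, ← ih' hwF hD hE' ((subset_insert _ _).trans hsub) hwE',
        ih' huF hD hE ((insert_subset_insert _ (subset_insert _ _)).trans hsub) huE]
    have hex {E E' : Finset V} (hE : K.IsFacet E) (hE' : K.IsFacet E') (hFE : F ⊆ E) (hFE' : F ⊆ E')
        (h : E.card ≠ E'.card) : ∃ u ∈ E, u ∉ F := by
      by_contra! hsub
      refine h ?_
      rw [hE.2 E' hE'.1 (Finset.Subset.trans hsub hFE')]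
    obtain ⟨u, huH, huF⟩ := hex hH hH' hFH hFH' hne
    obtain ⟨w, hwH, hwF⟩ := hex hH' hH hFH' hFH (Ne.symm hne)
    have hu : u ∈ U := ⟨huF, H, hH, insert_subset huH hFH, rfl⟩
    have hw : w ∈ U' := ⟨hwF, H', hH', insert_subset hwH hFH', Ne.symm hne⟩
    have hht : 2 ≤ (facePrime k K F).height := by
      have h1 := card_le_card (insert_subset huH hFH)
      have h2 := card_le_card (insert_subset hwH hFH')
      rw [card_insert_of_notMem huF] at h1
      rw [card_insert_of_notMem hwF] at h2
      rcases lt_or_gt_of_ne hne with h | h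
      · exact two_le_height_facePrime hH'.1 hFH' (by omega)
      · exact two_le_height_facePrime hH.1 hFH (by omega)
    have hprime := facePrime_isPrime (k := k) hF
    set R := Localization.AtPrime (facePrime k K F) with hR
    let y : V → R := fun v => algebraMap _ R (srX k K v)
    have hdepth : DepthGE R R 2 :=
      serreCondS_iff.mp hS (facePrime k K F) 2 hℓ (by exact_mod_cast hht)
    have hyunit {v : SRRing k K} (hv : v ∉ facePrime k K F) : IsUnit (algebraMap _ R v) :=
      IsLocalization.map_units R (⟨v, hv⟩ : (facePrime k K F).primeCompl)
    have hy0 {s : Finset V} (hs : s ∪ F ∉ K.faces) (hsF : Disjoint s F) : ∏ v ∈ s, y v = 0 := by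
      have h1 := congrArg (algebraMap _ R) (prod_srX_eq_zero (k := k) hs)
      rw [prod_union hsF, map_mul, map_zero] at h1
      have h2 := (hyunit (prod_srX_notMem_facePrime hF)).mul_left_eq_zero.mp h1
      rwa [map_prod] at h2
    have hyne {v : V} (hv : insert v F ∈ K.faces) : y v ≠ 0 := by
      intro h0
      obtain ⟨t, ht, h1⟩ := (Localization.AtPrime.algebraMap_eq_zero_iff _).mp h0
      have h2 := facePrime_isPrime (k := k) hv
      rcases h2.mem_or_mem (h1 ▸ zero_mem _ : t * srX k K v ∈ facePrime k K (insert v F)) with h | h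
      · exact ht (facePrime_anti (subset_insert _ _) h)
      · exact (srX_mem_facePrime_iff hv).mp h (mem_insert_self _ _)
    refine DepthGE.not_two_of_sup_eq_maximalIdeal (I := Ideal.span (y '' U))
      (J := Ideal.span (y '' U')) ?_ ?_ ?_ ?_ hdepth
    · rw [Ideal.span_mul_span', Ideal.span_eq_bot]
      rintro _ ⟨_, ⟨u, hu, rfl⟩, _, ⟨w, hw, rfl⟩, rfl⟩
      have huw : u ≠ w := by
        rintro rfl
        obtain ⟨-, E, hE, hsub, hcard⟩ := hu
        obtain ⟨huF, E', hE', hsub', hcard'⟩ := hw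
        exact hcard' (by rw [← hcard, ih' huF hE hE' hsub hsub'])
      have h1 := hy0 (s := {u, w}) (by simpa [insert_union] using hUU' hu hw)
        (by simp [hu.1, hw.1])
      rwa [prod_pair huw] at h1
    · rw [← Ideal.span_union, ← Set.image_union, 
        Localization.AtPrime.maximalIdeal_eq_span_image (srX k K) _ (facePrime k K F) rfl]
      refine le_antisymm (Ideal.span_mono (Set.image_mono ?_)) (Ideal.span_le.mpr ?_)
      · rintro v (hv | hv)
        exacts [hv.1, hv.1]
      · rintro _ ⟨v, hv, rfl⟩
        change v ∉ F at hv
        by_cases hvF : insert v F ∈ K.faces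
        · obtain ⟨E, hE, hsub⟩ := exists_isFacet_superset hvF
          refine Ideal.subset_span ⟨v, ?_, rfl⟩
          by_cases h : E.card = H.card
          · exact Or.inl ⟨hv, E, hE, hsub, h⟩
          · exact Or.inr ⟨hv, E, hE, hsub, h⟩
        · have h1 := hy0 (s := {v}) (by simpa using hvF) (by simpa using hv)
          rw [prod_singleton] at h1
          change y v ∈ _
          rw [h1]
          exact zero_mem _
    · intro h
      refine hyne (K.down_closed hH.1 (insert_subset huH hFH)) ?_
      exact Ideal.span_eq_bot.mp h _ ⟨u, hu, rfl⟩
    · intro h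
      refine hyne (K.down_closed hH'.1 (insert_subset hwH hFH')) ?_
      exact Ideal.span_eq_bot.mp h _ ⟨w, hw, rfl⟩

end SComplex

section Height

variable {S A B C : Type} [CommRing S] [CommRing A] [CommRing B] [CommRing C]

theorem PrimeSpectrum.comap_lt_comap_iff_of_surjective {f : A →+* B} (hf : Function.Surjective f)
    {p q : PrimeSpectrum B} : p.comap f < q.comap f ↔ p < q := by
  have hle (p q : PrimeSpectrum B) : p.comap f ≤ q.comap f ↔ p ≤ q :=
    Ideal.comap_le_comap_iff_of_surjective f hf p.asIdeal q.asIdeal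
  rw [lt_iff_le_not_ge, lt_iff_le_not_ge, hle, hle]

theorem Ideal.height_le_height_comap_of_surjective {f : A →+* B} (hf : Function.Surjective f)
    (P : Ideal B) [hP : P.IsPrime] : P.height ≤ (P.comap f).height := by
  have h := Order.height_le_height_apply_of_strictMono (PrimeSpectrum.comap f)
    (fun p q h => (PrimeSpectrum.comap_lt_comap_iff_of_surjective hf).mpr h) ⟨P, hP⟩
  rwa [← PrimeSpectrum.height_eq_orderHeight, ← PrimeSpectrum.height_eq_orderHeight] at h

theorem Ideal.height_le_height_map_C (P : Ideal C) [hP : P.IsPrime] :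
    P.height ≤ (P.map Polynomial.C).height := by
  let g (p : PrimeSpectrum C) : PrimeSpectrum (Polynomial C) :=
    ⟨p.asIdeal.map Polynomial.C, have := p.isPrime; Ideal.isPrime_map_C_of_isPrime⟩
  have hle (p q : PrimeSpectrum C) : g p ≤ g q ↔ p ≤ q := by
    refine ⟨fun h a ha => ?_, fun h => Ideal.map_mono h⟩
    have h1 := Ideal.mem_map_C_iff.mp (h (Ideal.mem_map_of_mem _ ha)) 0
    rwa [Polynomial.coeff_C_zero] at h1
  have h := Order.height_le_height_apply_of_strictMono g
    (fun p q h => by rwa [lt_iff_le_not_ge, hle, hle, ← lt_iff_le_not_ge]) ⟨P, hP⟩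
  rwa [← PrimeSpectrum.height_eq_orderHeight, ← PrimeSpectrum.height_eq_orderHeight] at h

/-- Heights in two quotients of a ring `S` are compared by moving chains of primes along
endomorphisms of `S`. -/
theorem Ideal.height_le_height_of_forall_exists {f : S →+* B} (hf : Function.Surjective f)
    {g : S →+* C} (hg : Function.Surjective g) (P : Ideal B) [hP : P.IsPrime]
    (P' : Ideal C) [hP' : P'.IsPrime]
    (h : ∀ q : Ideal S, q.IsPrime → RingHom.ker f ≤ q → q ≤ P.comap f →
      ∃ e : S →+* S, Function.Surjective e ∧ (P.comap f).comap e = P'.comap g ∧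
        RingHom.ker g ≤ q.comap e) :
    P.height ≤ P'.height := by
  refine ENat.forall_natCast_le_iff_le.mp fun n hn => ?_
  rw [(⟨P, hP⟩ : PrimeSpectrum B).height_eq_orderHeight] at hn
  rw [(⟨P', hP'⟩ : PrimeSpectrum C).height_eq_orderHeight]
  obtain ⟨l, hl, rfl⟩ := Order.exists_series_of_le_height _ hn
  obtain ⟨e, he, heP, hker⟩ := h (l.head.asIdeal.comap f) inferInstance
    (fun a ha => by
      rw [Ideal.mem_comap, RingHom.mem_ker.mp ha]
      exact zero_mem _)
    (Ideal.comap_mono (hl ▸ l.head_le_last : l.head ≤ ⟨P, hP⟩))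
  have hmem (i : Fin (l.length + 1)) :
      ((l i).comap f).comap e ∈ Set.range (PrimeSpectrum.comap g) := by
    rw [range_comap_of_surjective _ _ hg, PrimeSpectrum.mem_zeroLocus]
    exact hker.trans (Ideal.comap_mono (Ideal.comap_mono (l.head_le i)))
  choose c hc using hmem
  let l' : LTSeries (PrimeSpectrum C) :=
    { length := l.length
      toFun := c
      step := fun i => by
        change c i.castSucc < c i.succ
        rw [← PrimeSpectrum.comap_lt_comap_iff_of_surjective hg, hc, hc,
          PrimeSpectrum.comap_lt_comap_iff_of_surjective he,
          PrimeSpectrum.comap_lt_comap_iff_of_surjective hf]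
        exact l.step i }
  refine Order.length_le_height (p := l') (le_of_eq ?_)
  refine PrimeSpectrum.comap_injective_of_surjective g hg ?_
  refine (hc _).trans (PrimeSpectrum.ext ?_)
  have : (l (Fin.last _)) = ⟨P, hP⟩ := hl
  rw [this]
  exact heP

theorem exists_perm_of_card_eq {V : Type} [DecidableEq V] {F G G' : Finset V} (hF : F ⊆ G)
    (hF' : F ⊆ G') (h : G.card = G'.card) :
    ∃ σ : Equiv.Perm V, (∀ v ∈ F, σ v = v) ∧ ∀ v ∈ G, σ v ∈ G' := by
  induction hn : (G \ G').card generalizing G with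
  | zero =>
    rw [card_eq_zero, sdiff_eq_empty_iff_subset] at hn
    exact ⟨1, fun _ _ => rfl, fun v hv => hn hv⟩
  | succ n ih =>
    obtain ⟨a, ha⟩ := card_pos.mp (by omega : 0 < (G \ G').card)
    obtain ⟨b, hb⟩ := card_pos.mp (by
      have := card_sdiff_add_card_inter G G'
      have := card_sdiff_add_card_inter G' G
      rw [inter_comm] at this
      omega : 0 < (G' \ G).card)
    rw [mem_sdiff] at ha hb
    have haF : a ∉ F := fun h => ha.2 (hF' h)
    have hbF : b ∉ F := fun h => hb.2 (hF h)
    have hbE : b ∉ G.erase a := fun h => hb.2 (mem_of_mem_erase h)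
    obtain ⟨σ, hσF, hσ⟩ := ih (G := insert b (G.erase a))
      (fun v hv => mem_insert_of_mem (mem_erase.mpr ⟨fun h => haF (h ▸ hv), hF hv⟩))
      (by rw [card_insert_of_notMem hbE, card_erase_add_one ha.1, h])
      (by
        rw [insert_sdiff_of_mem _ hb.1, erase_sdiff_comm, card_erase_of_mem (mem_sdiff.mpr ha), hn,
          Nat.add_sub_cancel])
    refine ⟨(Equiv.swap a b).trans σ, fun v hv => ?_, fun v hv => ?_⟩
    · rw [Equiv.trans_apply, Equiv.swap_apply_of_ne_of_ne (ne_of_mem_of_not_mem hv haF)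
        (ne_of_mem_of_not_mem hv hbF), hσF v hv]
    · rw [Equiv.trans_apply]
      refine hσ _ ?_
      rcases eq_or_ne v a with rfl | hva
      · rw [Equiv.swap_apply_left]
        exact mem_insert_self _ _
      · rw [Equiv.swap_apply_of_ne_of_ne hva (ne_of_mem_of_not_mem hv hb.2)]
        exact mem_insert_of_mem (mem_erase.mpr ⟨hva, hv⟩)

theorem DepthGE.one_of_one_le_height [IsNoetherianRing A] [IsReduced A] (p : Ideal A) [p.IsPrime]
    (hp : 1 ≤ p.height) : DepthGE (Localization.AtPrime p) (Localization.AtPrime p) 1 := by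
  have hred : IsReduced (Localization.AtPrime p) :=
    isReduced_localizationPreserves p.primeCompl _ inferInstance
  obtain ⟨x, hx, hreg⟩ := DepthGE.exists_isSMulRegular (R := Localization.AtPrime p)
    (M := Localization.AtPrime p) fun u hu => by
      by_cases h : IsUnit u
      · have hfield : IsField (Localization.AtPrime p) := by
          rw [IsLocalRing.isField_iff_maximalIdeal_eq, eq_bot_iff]
          exact fun a ha => h.mul_left_eq_zero.mp (hu a ha)
        have h1 := IsLocalization.AtPrime.ringKrullDim_eq_height p (Localization.AtPrime p)
        rw [ringKrullDim_eq_zero_of_isField hfield] at h1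
        have h2 : p.height = 0 := by exact_mod_cast h1.symm
        simp [h2] at hp
      · exact IsReduced.eq_zero u ⟨2, (sq u).trans (hu u h)⟩
  exact DepthGE.of_isWeaklyRegular (rs := [x]) (by simpa using hx)
    ((RingTheory.Sequence.isWeaklyRegular_singleton_iff _ _).mpr hreg) le_rfl

end Height

section Quotient

variable {A B ι : Type} [CommRing A] [CommRing B] [IsNoetherianRing A] [IsNoetherianRing B]

theorem DepthGE.of_quotient_span_image {f : A →+* B} (hf : Function.Surjective f)
    {x : ι → A} {s : Set ι} (hfx : RingHom.ker f = Ideal.span (x '' s))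
    (P : Ideal B) [P.IsPrime] {n : ℕ}
    (h : DepthGE (Localization.AtPrime (P.comap f)) (Localization.AtPrime (P.comap f) ⧸
      Ideal.span ((fun i => algebraMap A (Localization.AtPrime (P.comap f)) (x i)) '' s)) n) :
    DepthGE (Localization.AtPrime P) (Localization.AtPrime P) n := by
  let ρ := Localization.localRingHom (P.comap f) P f rfl
  have hρ : Function.Surjective ρ := Localization.localRingHom_surjective f hf _ _ rfl
  let := ρ.toAlgebra
  refine (DepthGE.iff_of_surjective (R := Localization.AtPrime (P.comap f)) hρ).mp ?_
  refine h.congr ((Submodule.quotEquivOfEq _ _ ?_).trans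
    ((Algebra.linearMap (Localization.AtPrime (P.comap f))
      (Localization.AtPrime P)).quotKerEquivOfSurjective hρ))
  have key (a : A) : ρ (algebraMap A _ a) = 0 ↔ ∃ t ∉ P.comap f, f (t * a) = 0 :=
    Localization.localRingHom_algebraMap_eq_zero_iff f hf _ _ rfl
  apply le_antisymm
  · refine Submodule.span_le.mpr ?_
    rintro _ ⟨i, hi, rfl⟩
    refine (key (x i)).mpr ⟨1, (Ideal.ne_top_iff_one _).mp (Ideal.IsPrime.ne_top inferInstance), ?_⟩
    rw [one_mul, ← RingHom.mem_ker, hfx]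
    exact Ideal.subset_span ⟨i, hi, rfl⟩
  · intro r hr
    change ρ r = 0 at hr
    obtain ⟨u, a, hu, rfl⟩ := Localization.AtPrime.exists_mul_eq (P.comap f) r
    rw [map_mul, (hu.map ρ).mul_right_eq_zero, key] at hr
    obtain ⟨t, ht, hta⟩ := hr
    rw [← RingHom.mem_ker, hfx] at hta
    have h1 := Ideal.mem_map_of_mem (algebraMap A (Localization.AtPrime (P.comap f))) hta
    rw [Ideal.map_span, Set.image_image, map_mul] at h1
    refine Ideal.mul_mem_left _ u ?_
    exact (Ideal.unit_mul_mem_iff_mem _ (IsLocalization.map_units _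
      (⟨t, ht⟩ : (P.comap f).primeCompl))).mp h1

open Polynomial in
theorem DepthGE.of_ker_eq_span_image [DecidableEq ι] {f : A →+* B} (hf : Function.Surjective f)
    {x : ι → A} {J : Finset ι} (hfx : RingHom.ker f = Ideal.span (x '' J))
    (horth : ∀ i ∈ J, ∀ j ∈ J, i ≠ j → x i * x j = 0)
    {C : ι → Type} [∀ i, CommRing (C i)] [∀ i, IsNoetherianRing (C i)] (ψ : ∀ i, A →+* (C i)[X])
    (hψ : ∀ i, Function.Surjective (ψ i)) (hx : ∀ i, ψ i (x i) = X)
    (hker : ∀ i a, ψ i a = 0 → x i * a = 0) (P : Ideal B) [P.IsPrime] {n : ℕ}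
    (hA : DepthGE (Localization.AtPrime (P.comap f)) (Localization.AtPrime (P.comap f)) n)
    (h : ∀ i ∈ J, ∀ (P' : Ideal (C i)) [P'.IsPrime],
      P'.comap ((evalRingHom 0).comp (ψ i)) = P.comap f →
      DepthGE (Localization.AtPrime ((P'.map Polynomial.C).comap (ψ i)))
        (Localization.AtPrime ((P'.map Polynomial.C).comap (ψ i))) n) :
    DepthGE (Localization.AtPrime P) (Localization.AtPrime P) n := by
  refine DepthGE.of_quotient_span_image hf hfx P (DepthGE.quotient_span_image _ J ?_ ?_ ?_ hA)
  · intro i hi j hj hij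
    rw [← map_mul, horth i hi j hj hij, map_zero]
  · exact fun i _ r => mul_eq_zero_of_mul_mul_eq_zero_of_X (hx i) (hker i) _
  · refine fun i hi => DepthGE.span_singleton (ψ i) (hψ i) (hx i) (hker i) _ ?_ (h i hi)
    have : x i ∈ RingHom.ker f := hfx ▸ Ideal.subset_span ⟨i, hi, rfl⟩
    rw [Ideal.mem_comap, RingHom.mem_ker.mp this]
    exact zero_mem _

end Quotient

namespace SComplex

open MvPolynomial

variable {V : Type} [DecidableEq V] {k : Type} [Field k] {K : SComplex V} {J : Finset V}

theorem exists_finset_notMem (q : Ideal (MvPolynomial V k)) (hq : srIdeal k K ≤ q) :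
    ∃ G : Finset V, ∀ v, v ∈ G ↔ X v ∉ q := by
  classical
  refine ⟨(K.faces.sup id).filter fun v => X v ∉ q, fun v => ?_⟩
  rw [mem_filter, and_iff_right_iff_imp]
  intro hv
  by_contra hsup
  refine hv (hq ?_)
  have h := srIdeal_le_iff.mp (le_refl (srIdeal k K)) {v} fun h =>
    hsup (mem_sup.mpr ⟨{v}, h, mem_singleton_self v⟩)
  rwa [prod_singleton] at h

theorem height_le_height_link (hpure : ∀ H H', K.IsFacet H → K.IsFacet H' → H.card = H'.card)
    (hexc : ∀ F : Finset V, K.IsFacet F → (J ∩ F).Nonempty) {j : V}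
    (P : Ideal (SRRing k (K.antistar J))) [P.IsPrime]
    (P' : Ideal (SRRing k (K.link {j}))) [P'.IsPrime]
    (h : P.comap (Ideal.Quotient.mk _) = P'.comap (Ideal.Quotient.mk _)) :
    P.height ≤ P'.height := by
  refine Ideal.height_le_height_of_forall_exists Ideal.Quotient.mk_surjective
    Ideal.Quotient.mk_surjective P P' fun q hq hker hqP => ?_
  rw [Ideal.mk_ker] at hker ⊢
  set Q : Ideal (MvPolynomial V k) := P.comap (Ideal.Quotient.mk _)
  have hQprime : Q.IsPrime := inferInstance
  have hQlink : srIdeal k (K.link {j}) ≤ Q := by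
    rw [h]
    intro a ha
    rw [Ideal.mem_comap, Ideal.Quotient.eq_zero_iff_mem.mpr ha]
    exact zero_mem _
  obtain ⟨G, hG⟩ := exists_finset_notMem q hker
  obtain ⟨F, hF⟩ := exists_finset_notMem Q hQlink
  have hGK := mem_antistar_iff.mp
    (srIdeal_le_iff_of_isPrime.mp hker G fun v hv => (hG v).mp hv)
  have hFK := mem_link_iff.mp
    (srIdeal_le_iff_of_isPrime.mp hQlink F fun v hv => (hF v).mp hv)
  have hFG : F ⊆ G := fun v hv => (hG v).mpr fun h => (hF v).mp hv (hqP h)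
  obtain ⟨H, hH, hGH⟩ := exists_isFacet_superset hGK.1
  obtain ⟨H', hH', hFH'⟩ := exists_isFacet_superset hFK.2
  obtain ⟨i, hi⟩ := hexc H hH
  rw [mem_inter] at hi
  have hjH' : j ∈ H' := hFH' (mem_insert_self _ _)
  have hGHi : G ⊆ H.erase i := fun v hv =>
    mem_erase.mpr ⟨fun h => disjoint_left.mp hGK.2 hi.1 (h ▸ hv), hGH hv⟩
  obtain ⟨σ, hσF, hσ⟩ := exists_perm_of_card_eq (F := F) (hFG.trans hGHi)
    (G' := H'.erase j)
    (fun v hv => mem_erase.mpr ⟨fun h => hFK.1 (h ▸ hv), hFH' (mem_insert_of_mem hv)⟩)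
    (by rw [card_erase_of_mem hi.2, card_erase_of_mem hjH', hpure H H' hH hH'])
  have hτF (v : V) (hv : v ∈ F) : σ.symm v = v := by rw [Equiv.symm_apply_eq, hσF v hv]
  refine ⟨(rename σ.symm : MvPolynomial V k →ₐ[k] MvPolynomial V k).toRingHom,
    rename_surjective _ σ.symm.surjective, ?_, ?_⟩
  · have hmk : (Ideal.Quotient.mk Q).comp
        (rename σ.symm : MvPolynomial V k →ₐ[k] MvPolynomial V k).toRingHom =
          Ideal.Quotient.mk Q := by
      refine MvPolynomial.ringHom_ext (fun c => by simp) fun v => ?_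
      by_cases hv : v ∈ F
      · simp [hτF v hv]
      · have hv' : σ.symm v ∉ F := fun h => hv (by
          have := hσF _ h
          rw [Equiv.apply_symm_apply] at this
          rwa [this])
        rw [hF, not_not] at hv hv'
        rw [Ideal.Quotient.eq_zero_iff_mem.mpr hv]
        simpa [Ideal.Quotient.eq_zero_iff_mem] using hv'
    rw [← h]
    ext a
    rw [Ideal.mem_comap, ← Ideal.Quotient.eq_zero_iff_mem, ← Ideal.Quotient.eq_zero_iff_mem,
      ← RingHom.comp_apply, hmk]
  · rw [srIdeal_le_iff_of_isPrime]
    intro s hs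
    have hsub : s ⊆ H'.erase j := fun v hv => by
      have h1 := hσ _ (hGHi ((hG (σ.symm v)).mpr (by simpa using hs v hv)))
      rwa [Equiv.apply_symm_apply] at h1
    refine (K.link {j}).down_closed (mem_link_iff.mpr ⟨notMem_erase j H', ?_⟩) hsub
    rw [insert_erase hjH']
    exact hH'.1

theorem srIdeal_le_srIdeal_antistar : srIdeal k K ≤ srIdeal k (K.antistar J) :=
  srIdeal_le_iff.mpr fun s hs =>
    srIdeal_le_iff.mp le_rfl s fun h => hs (mem_antistar_iff.mp h).1

variable (k K J) in
/-- The projection of `k[Δ]` onto the Stanley–Reisner ring of an anti-star. -/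
noncomputable def antistarHom : SRRing k K →+* SRRing k (K.antistar J) :=
  Ideal.Quotient.factor srIdeal_le_srIdeal_antistar

theorem antistarHom_surjective : Function.Surjective (antistarHom k K J) :=
  Ideal.Quotient.factor_surjective _

theorem ker_antistarHom : RingHom.ker (antistarHom k K J) = Ideal.span (srX k K '' J) := by
  apply le_antisymm
  · intro a ha
    obtain ⟨p, rfl⟩ := Ideal.Quotient.mk_surjective a
    rw [RingHom.mem_ker, antistarHom, Ideal.Quotient.factor_mk, Ideal.Quotient.eq_zero_iff_mem] at ha
    refine (srIdeal_le_iff (I := (Ideal.span (srX k K '' J)).comap (Ideal.Quotient.mk _))).mpr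
      (fun s hs => ?_) ha
    rw [Ideal.mem_comap, map_prod]
    change ∏ v ∈ s, srX k K v ∈ _
    by_cases hsK : s ∈ K.faces
    · obtain ⟨v, hvJ, hvs⟩ := not_disjoint_iff.mp fun h => hs (mem_antistar_iff.mpr ⟨hsK, h⟩)
      exact Ideal.mem_of_dvd _ (dvd_prod_of_mem _ hvs) (Ideal.subset_span ⟨v, hvJ, rfl⟩)
    · rw [prod_srX_eq_zero hsK]
      exact zero_mem _
  · rw [Ideal.span_le]
    rintro _ ⟨v, hv, rfl⟩
    change antistarHom k K J (srX k K v) = 0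
    rw [← prod_srX_eq_zero (k := k) (K := K.antistar J) (s := {v}) fun h =>
      disjoint_left.mp (mem_antistar_iff.mp h).2 hv (mem_singleton_self v), prod_singleton]
    rfl

end SComplex

/-- If `J ⊆ V(Δ)` is an excellent set for `Δ` (an independent set meeting every
facet) and `Δ` satisfies `(S_ℓ)`, then the anti-star `ast_Δ(J)` satisfies `(S_ℓ)`. -/
theorem excellent_antistar_serre {V : Type} [DecidableEq V] (k : Type) [Field k]
    (K : SComplex V) (J : Finset V)
    (hJV : ∀ a ∈ J, ({a} : Finset V) ∈ K.faces)
    (hindep : ∀ a ∈ J, ∀ b ∈ J, a ≠ b → ({a, b} : Finset V) ∉ K.faces)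
    (hexc : ∀ F : Finset V, K.IsFacet F → (J ∩ F).Nonempty)
    (ℓ : ℕ) (hserre : SComplex.SerreS k ℓ K) :
    SComplex.SerreS k ℓ (K.antistar J) := by
  refine serreCondS_iff.mpr fun P _ n hnℓ hnP => ?_
  rcases Nat.lt_or_ge n 2 with hn2 | hn2
  · interval_cases n
    · exact fun i hi => absurd hi i.not_lt_zero
    · exact DepthGE.one_of_one_le_height P hnP
  have hpure (H H' : Finset V) := SComplex.card_eq_of_serreS (H := H) (H' := H')
    (hn2.trans hnℓ) hserre
  have hS := serreCondS_iff.mp hserre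
  refine DepthGE.of_ker_eq_span_image SComplex.antistarHom_surjective SComplex.ker_antistarHom
    (fun a ha b hb hab => ?_) (SComplex.starHom k K) SComplex.starHom_surjective
    SComplex.starHom_self (fun _ _ => SComplex.mul_eq_zero_of_starHom_eq_zero) P
    (hS _ n hnℓ (hnP.trans
      (Ideal.height_le_height_comap_of_surjective SComplex.antistarHom_surjective P)))
    fun j _ P' _ hP' => ?_
  · rw [← prod_pair hab]
    exact SComplex.prod_srX_eq_zero (hindep a ha b hb hab)
  · have hcomap : P.comap (Ideal.Quotient.mk _) = P'.comap (Ideal.Quotient.mk _) := by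
      ext p
      have h := SetLike.ext_iff.mp hP' (Ideal.Quotient.mk _ p)
      rw [Ideal.mem_comap, RingHom.comp_apply, Polynomial.coe_evalRingHom,
        SComplex.eval_starHom_mk] at h
      exact h.symm
    have hprime : (P'.map Polynomial.C).IsPrime := Ideal.isPrime_map_C_of_isPrime
    exact hS _ n hnℓ (hnP.trans ((SComplex.height_le_height_link hpure hexc P P' hcomap).trans
      (P'.height_le_height_map_C.trans
        (Ideal.height_le_height_comap_of_surjective (SComplex.starHom_surjective j) _))))
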